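/- arXiv:1501.04744 — 4 statements merged into one kernel-verified Lean document; each statement's English description precedes it below -/
import Mathlib

section
/- Let b be a positive integer and let ℤ[ω] = ℤ[X]/(X²+X+1) be the ring of Eisenstein integers, with ω the class of X. In the quotient ring ℤ[ω]/(−b+bω), the additive order of the residue class of 1 is 3b and the additive order of the residue class of 2+ω is b. -/
open Polynomial

/-- The ring of Eisenstein integers ℤ[ω] = ℤ[X]/(X²+X+1). -/
abbrev Eisenstein : Type := AdjoinRoot ((X : ℤ[X]) ^ 2 + X + 1)

/-- ω, the class of X in ℤ[X]/(X²+X+1). -/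
noncomputable abbrev eisensteinOmega : Eisenstein := AdjoinRoot.root _

/-!
The generator of the ideal is `b(ω - 1)`, and `(ω - 1)(2 + ω) = -3` while `2 + ω = (ω - 1)ω²`.
Multiplying `b(ω - 1) ∣ k` by `2 + ω` gives `3b ∣ k(2 + ω)`, and `b(ω - 1) ∣ k(2 + ω)` implies
`b ∣ k(2 + ω)`. As `1, ω` are linearly independent over `ℤ` and `2 + ω` has `ω`-coefficient `1`,
an integer divides `k(2 + ω)` only if it divides `k`. The two identities also give the converses.
-/

section CommRing

variable {R : Type*} [CommRing R]

theorem addOrderOf_mk_span_singleton_dvd_iff (β α : R) (k : ℕ) :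
    addOrderOf (Ideal.Quotient.mk (Ideal.span {β}) α) ∣ k ↔ β ∣ k * α := by
  rw [addOrderOf_dvd_iff_nsmul_eq_zero, ← map_nsmul, Ideal.Quotient.eq_zero_iff_mem,
    Ideal.mem_span_singleton, nsmul_eq_mul]

theorem sub_one_mul_two_add_of_sq_add_self_add_one {ω : R} (hω : ω ^ 2 + ω + 1 = 0) :
    (ω - 1) * (2 + ω) = -3 := by
  linear_combination hω

theorem two_add_eq_sub_one_mul_sq_of_sq_add_self_add_one {ω : R} (hω : ω ^ 2 + ω + 1 = 0) :
    2 + ω = (ω - 1) * ω ^ 2 := by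
  linear_combination (2 - ω) * hω

theorem adjoinRoot_of_dvd_mk_iff {f : R[X]} (hf : f.Monic) (r : R) (p : R[X]) :
    AdjoinRoot.of f r ∣ AdjoinRoot.mk f p ↔ C r ∣ p %ₘ f := by
  constructor
  · rintro ⟨z, hz⟩
    obtain ⟨q, rfl⟩ := AdjoinRoot.mk_surjective z
    have hmod := congrArg (AdjoinRoot.modByMonicHom hf) hz
    rw [← AdjoinRoot.mk_C, ← map_mul, AdjoinRoot.modByMonicHom_mk, AdjoinRoot.modByMonicHom_mk,
      ← smul_eq_C_mul, smul_modByMonic, smul_eq_C_mul] at hmod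
    exact ⟨q %ₘ f, hmod⟩
  · intro h
    have hmk : AdjoinRoot.mk f (p %ₘ f) = AdjoinRoot.mk f p := by
      rw [← AdjoinRoot.modByMonicHom_mk hf, AdjoinRoot.mk_leftInverse hf]
    rw [← hmk, ← AdjoinRoot.mk_C]
    exact map_dvd (AdjoinRoot.mk f) h

theorem adjoinRoot_of_dvd_of_mul_of_add_root_iff {f : R[X]} (hf : f.Monic) (hdeg : 1 < f.degree)
    (r s a : R) :
    AdjoinRoot.of f r ∣ AdjoinRoot.of f s * (AdjoinRoot.of f a + AdjoinRoot.root f) ↔ r ∣ s := by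
  refine ⟨fun h ↦ ?_, fun h ↦ (map_dvd (AdjoinRoot.of f) h).mul_right _⟩
  have hmk : AdjoinRoot.of f s * (AdjoinRoot.of f a + AdjoinRoot.root f) =
      AdjoinRoot.mk f (C s * X + C (s * a)) := by
    simp only [map_add, map_mul, AdjoinRoot.mk_C, AdjoinRoot.mk_X]
    ring
  have hlt : (C s * X + C (s * a)).degree < f.degree := degree_linear_le.trans_lt hdeg
  nontriviality R
  rw [hmk, adjoinRoot_of_dvd_mk_iff hf, (modByMonic_eq_self_iff hf).mpr hlt,
    C_dvd_iff_dvd_coeff] at h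
  simpa only [coeff_add, coeff_C_mul, coeff_X_one, mul_one, coeff_C_succ, add_zero] using h 1

end CommRing

theorem eisensteinOmega_sq_add_self_add_one : eisensteinOmega ^ 2 + eisensteinOmega + 1 = 0 := by
  have h : AdjoinRoot.mk ((X : ℤ[X]) ^ 2 + X + 1) (X ^ 2 + X + 1) = 0 := AdjoinRoot.mk_self
  rwa [map_add, map_add, map_pow, AdjoinRoot.mk_X, map_one] at h

theorem natCast_dvd_natCast_mul_two_add_eisensteinOmega_iff (n k : ℕ) :
    (n : Eisenstein) ∣ k * (2 + eisensteinOmega) ↔ n ∣ k := by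
  have hmonic : ((X : ℤ[X]) ^ 2 + X + 1).Monic := by monicity!
  have hdegree : ((X : ℤ[X]) ^ 2 + X + 1).degree = 2 := by compute_degree!
  have h := adjoinRoot_of_dvd_of_mul_of_add_root_iff hmonic (by rw [hdegree]; norm_num)
    (n : ℤ) k 2
  rwa [map_natCast, map_natCast, map_ofNat, Int.natCast_dvd_natCast] at h

theorem natCast_mul_eisensteinOmega_sub_one_dvd_natCast_iff (b k : ℕ) :
    (b : Eisenstein) * (eisensteinOmega - 1) ∣ k ↔ 3 * b ∣ k := by
  have hthree : (eisensteinOmega - 1) * (2 + eisensteinOmega) = -3 :=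
    sub_one_mul_two_add_of_sq_add_self_add_one eisensteinOmega_sq_add_self_add_one
  have hcast : ((3 * b : ℕ) : Eisenstein) =
      -(b * (eisensteinOmega - 1) * (2 + eisensteinOmega)) := by
    push_cast
    linear_combination (b : Eisenstein) * hthree
  constructor
  · intro h
    rw [← natCast_dvd_natCast_mul_two_add_eisensteinOmega_iff, hcast, neg_dvd]
    exact mul_dvd_mul_right h _
  · intro h
    have hdvd : ((3 * b : ℕ) : Eisenstein) ∣ k := Nat.cast_dvd_cast h
    rw [hcast, neg_dvd] at hdvd
    exact dvd_of_mul_right_dvd hdvd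

theorem natCast_mul_eisensteinOmega_sub_one_dvd_natCast_mul_two_add_iff (b k : ℕ) :
    (b : Eisenstein) * (eisensteinOmega - 1) ∣ k * (2 + eisensteinOmega) ↔ b ∣ k := by
  constructor
  · intro h
    rw [← natCast_dvd_natCast_mul_two_add_eisensteinOmega_iff]
    exact dvd_of_mul_right_dvd h
  · intro h
    rw [two_add_eq_sub_one_mul_sq_of_sq_add_self_add_one eisensteinOmega_sq_add_self_add_one]
    exact mul_dvd_mul (Nat.cast_dvd_cast h) (dvd_mul_right _ _)

theorem stmt_4 (b : ℕ) (hb : 0 < b) :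
    addOrderOf (Ideal.Quotient.mk
      (Ideal.span {-(b : Eisenstein) + b * eisensteinOmega}) 1) = 3 * b ∧
    addOrderOf (Ideal.Quotient.mk
      (Ideal.span {-(b : Eisenstein) + b * eisensteinOmega})
      (2 + eisensteinOmega)) = b := by
  have hgen : -(b : Eisenstein) + b * eisensteinOmega = b * (eisensteinOmega - 1) := by ring
  rw [hgen]
  constructor <;> refine Nat.dvd_right_iff_eq.mp fun k ↦ ?_
  · rw [addOrderOf_mk_span_singleton_dvd_iff, mul_one,
      natCast_mul_eisensteinOmega_sub_one_dvd_natCast_iff]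
  · rw [addOrderOf_mk_span_singleton_dvd_iff,
      natCast_mul_eisensteinOmega_sub_one_dvd_natCast_mul_two_add_iff]
end

section
/- Let H be the group with presentation ⟨A, B, C | A² = B³ = C⁷ = ABC = (B²CB²C⁴BC⁴)² = 1⟩. Then H has order 504. -/
/-- Relators of the quotient ⟨A, B, C | A² = B³ = C⁷ = ABC = S^k = 1⟩ of the
(2,3,7) triangle group, where S = B²CB²C⁴BC⁴ and the generators
A, B, C are represented by `FreeGroup.of 0`, `FreeGroup.of 1`, `FreeGroup.of 2`. -/
def hurwitzRels (k : ℕ) : Set (FreeGroup (Fin 3)) :=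
  {FreeGroup.of 0 ^ 2, FreeGroup.of 1 ^ 3, FreeGroup.of 2 ^ 7,
   FreeGroup.of 0 * FreeGroup.of 1 * FreeGroup.of 2,
   (FreeGroup.of 1 ^ 2 * FreeGroup.of 2 * FreeGroup.of 1 ^ 2 *
     FreeGroup.of 2 ^ 4 * FreeGroup.of 1 * FreeGroup.of 2 ^ 4) ^ k}

/-!
Write `a`, `c` for the images of `A`, `C`, so that `B = a * c⁻¹`, and put
`u = a * c ^ 2 * a * (c ^ 2)⁻¹ * a`. The group is `SL₂(𝔽₈)` acting on the nine points of the
projective line, with `c` a generator of the torus fixing `∞` (and `0`), and `u` a translation.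

*Upper bound.* The `(2,3,7)` relations alone show that in every action a point `p` fixed by `c` and
`u` has at most nine images, namely `p`, `a • c ^ 3 • a • p` and the `c ^ i • a • p`; so the index
of `⟨u, c⟩` is at most nine. Modulo them, `S ^ 2 = 1` says that `u * c ^ 2 * u = c ^ 3 * u * c⁻¹`,
i.e. that two conjugates of the involution `u` multiply to a third one, as translations do; this
gives `⟨u, c⟩ = ⟨c⟩ ∪ ⟨c⟩ u ⟨c⟩`, which has at most `7 + 7 * 7 = 56` elements.

*Lower bound.* The resulting permutations of nine points satisfy the relations and generate a triply
transitive group, whose order is therefore divisible by `9 * 8 * 7 = 504`.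
-/

namespace Macbeath

open Subgroup DoubleCoset
open scoped Pointwise

section Counting

variable {G X : Type*} [Group G] [MulAction G X]

theorem smul_mem_of_mem_closure {T : Set G} {s : Set X} (hs : s.Finite)
    (hT : ∀ t ∈ T, ∀ x ∈ s, t • x ∈ s) {g : G} (hg : g ∈ closure T) {x : X} (hx : x ∈ s) :
    g • x ∈ s := by
  have hle : closure T ≤ MulAction.stabilizer G s := (closure_le _).2 fun t ht =>
    (MulAction.mem_stabilizer_set' hs).2 fun {x} hx => hT t ht x hx
  exact (MulAction.mem_stabilizer_set' hs).1 (hle hg) hx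

theorem closure_subset_of_mul_mem {T s : Set G} (hs : s.Finite) (h1 : 1 ∈ s)
    (hT : ∀ t ∈ T, ∀ x ∈ s, t * x ∈ s) : (closure T : Set G) ⊆ s := fun g hg => by
  simpa using smul_mem_of_mem_closure hs hT hg h1

theorem finite_doubleCoset (P : Subgroup G) [Finite P] (u : G) :
    (doubleCoset u P P : Set G).Finite :=
  ((Set.toFinite (P : Set G)).mul (Set.finite_singleton u)).mul (Set.toFinite (P : Set G))

theorem ncard_doubleCoset_le (P : Subgroup G) (u : G) :
    (doubleCoset u P P).ncard ≤ Nat.card P * Nat.card P :=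
  calc (doubleCoset u P P).ncard
      ≤ (P * {u} : Set G).ncard * (P : Set G).ncard := Set.natCard_mul_le
    _ ≤ (P : Set G).ncard * ({u} : Set G).ncard * (P : Set G).ncard :=
      Nat.mul_le_mul_right _ Set.natCard_mul_le
    _ = Nat.card P * Nat.card P := by rw [Set.ncard_singleton, mul_one]; rfl

theorem closure_insert_subset_union_doubleCoset (P : Subgroup G) [Finite P] (u : G)
    (hu : ∀ p ∈ P, u * p * u ∈ (P ∪ doubleCoset u P P : Set G)) :
    (closure (insert u (P : Set G)) : Set G) ⊆ P ∪ doubleCoset u P P := by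
  refine closure_subset_of_mul_mem ((Set.toFinite _).union (finite_doubleCoset P u))
    (.inl P.one_mem) ?_
  rintro t (rfl | ht) x (hx | hx)
  · exact .inr (mem_doubleCoset.2 ⟨1, P.one_mem, x, hx, by group⟩)
  · obtain ⟨p, hp, q, hq, rfl⟩ := mem_doubleCoset.1 hx
    rcases hu p hp with h | h
    · exact .inl (by simpa only [mul_assoc, SetLike.mem_coe] using P.mul_mem h hq)
    · obtain ⟨p', hp', q', hq', e⟩ := mem_doubleCoset.1 h
      refine .inr (mem_doubleCoset.2 ⟨p', hp', q' * q, P.mul_mem hq' hq, ?_⟩)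
      calc t * (p * t * q) = t * p * t * q := by group
        _ = p' * t * (q' * q) := by rw [e, mul_assoc]
  · exact .inl (P.mul_mem ht hx)
  · obtain ⟨p, hp, q, hq, rfl⟩ := mem_doubleCoset.1 hx
    exact .inr (mem_doubleCoset.2 ⟨t * p, P.mul_mem ht hp, q, hq, by group⟩)

theorem finite_card_closure_insert_le (P : Subgroup G) [Finite P] (u : G)
    (hu : ∀ p ∈ P, u * p * u ∈ (P ∪ doubleCoset u P P : Set G)) :
    Finite (closure (insert u (P : Set G))) ∧
      Nat.card (closure (insert u (P : Set G))) ≤ Nat.card P + Nat.card P * Nat.card P := by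
  have hfin : (P ∪ doubleCoset u P P : Set G).Finite :=
    (Set.toFinite _).union (finite_doubleCoset P u)
  have hsub := closure_insert_subset_union_doubleCoset P u hu
  exact ⟨hfin.subset hsub, (Set.ncard_le_ncard hsub hfin).trans <|
    (Set.ncard_union_le _ _).trans (Nat.add_le_add_left (ncard_doubleCoset_le P u) _)⟩

theorem finite_card_quotient_le {T : Set G} (hT : closure T = ⊤) {K : Subgroup G}
    {s : Set (G ⧸ K)} (hs : s.Finite) (h1 : ((1 : G) : G ⧸ K) ∈ s)
    (hTs : ∀ t ∈ T, ∀ x ∈ s, t • x ∈ s) : Finite (G ⧸ K) ∧ Nat.card (G ⧸ K) ≤ s.ncard := by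
  have huniv : s = Set.univ := by
    refine Set.eq_univ_of_forall fun y => ?_
    obtain ⟨g, rfl⟩ := QuotientGroup.mk_surjective y
    simpa using smul_mem_of_mem_closure hs hTs (hT ▸ mem_top g) h1
  rw [huniv] at hs ⊢
  exact ⟨Set.finite_univ_iff.1 hs, (Set.ncard_univ _).ge⟩

theorem pow_eq_inv_pow_of_pow_add_eq_one {c : G} {m n : ℕ} (h : c ^ (m + n) = 1) :
    c ^ m = (c ^ n)⁻¹ :=
  eq_inv_of_mul_eq_one_left (by rw [← pow_add, h])

theorem finite_card_zpowers_le {c : G} {n : ℕ} [NeZero n] (hc : c ^ n = 1) :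
    Finite (zpowers c) ∧ Nat.card (zpowers c) ≤ n :=
  ⟨(isOfFinOrder_iff_pow_eq_one.2 ⟨n, NeZero.pos n, hc⟩).finite_zpowers,
    (Nat.card_zpowers c).trans_le (orderOf_le_of_pow_eq_one (NeZero.pos n) hc)⟩

theorem exists_pow_eq_of_mem_zpowers {c : G} {n : ℕ} [NeZero n] (hc : c ^ n = 1) {g : G}
    (hg : g ∈ zpowers c) : ∃ i < n, c ^ i = g := by
  have hfin : IsOfFinOrder c := isOfFinOrder_iff_pow_eq_one.2 ⟨n, NeZero.pos n, hc⟩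
  obtain ⟨i, rfl⟩ := hfin.mem_powers_iff_mem_zpowers.2 hg
  exact ⟨i % n, Nat.mod_lt _ (NeZero.pos n), (pow_eq_pow_mod i hc).symm⟩

theorem isMultiplyPretransitive_three {a b c : X} (ha : ∀ x, ∃ g : G, g • x = a)
    (hb : ∀ x ≠ a, ∃ g : G, g • a = a ∧ g • x = b)
    (hc : ∀ x, x ≠ a → x ≠ b → ∃ g : G, g • a = a ∧ g • b = b ∧ g • x = c) :
    MulAction.IsMultiplyPretransitive G X 3 := by
  have move (x : Fin 3 ↪ X) : ∃ g : G, ∀ i, g • x i = ![a, b, c] i := by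
    obtain ⟨g, hg⟩ := ha (x 0)
    have hxa {i : Fin 3} (hi : i ≠ 0) : g • x i ≠ a := by
      rw [← hg]; simpa using hi
    obtain ⟨h, hha, hh⟩ := hb (g • x 1) (hxa (by decide))
    obtain ⟨k, hka, hkb, hk⟩ := hc (h • g • x 2)
      (by rw [← hha]; simpa using hxa (by decide)) (by rw [← hh]; simp)
    refine ⟨k * h * g, fun i => ?_⟩
    fin_cases i <;> simp [mul_smul, *]
  refine ⟨fun x y => ?_⟩
  obtain ⟨g, hg⟩ := move x
  obtain ⟨h, hh⟩ := move y
  refine ⟨h⁻¹ * g, Function.Embedding.ext fun i => ?_⟩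
  rw [Function.Embedding.smul_apply, mul_smul, hg, ← hh, inv_smul_smul]

theorem descFactorial_card_dvd_card [Finite X] {n : ℕ} [MulAction.IsMultiplyPretransitive G X n]
    (hn : n ≤ Nat.card X) : (Nat.card X).descFactorial n ∣ Nat.card G := by
  have : Fintype X := Fintype.ofFinite X
  obtain ⟨x⟩ : Nonempty (Fin n ↪ X) :=
    Function.Embedding.nonempty_of_card_le (by simpa using hn)
  have h := index_dvd_card (MulAction.stabilizer G x)
  rwa [MulAction.index_stabilizer_of_transitive, Nat.card_eq_fintype_card,
    Fintype.card_embedding_eq, Fintype.card_fin, ← Nat.card_eq_fintype_card] at h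

end Counting

section Triangle

variable {G : Type*} [Group G] {a c : G}

theorem mul_self_mul (ha : a * a = 1) (x : G) : a * (a * x) = x := by
  rw [← mul_assoc, ha, one_mul]

theorem mul_mul_self_eq (ha : a * a = 1) (hac : (a * c) ^ 3 = 1) :
    a * c * a = c⁻¹ * a * c⁻¹ := by
  have hcube : (a * c * a) * (c * a * c) = 1 := by simpa [pow_succ, mul_assoc] using hac
  rw [eq_inv_of_mul_eq_one_left hcube]
  simp [inv_eq_of_mul_eq_one_left ha, mul_assoc]

theorem mul_inv_mul_self_eq (ha : a * a = 1) (hac : (a * c) ^ 3 = 1) :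
    a * c⁻¹ * a = c * a * c := by
  simpa [inv_eq_of_mul_eq_one_left ha, mul_assoc] using congrArg (·⁻¹) (mul_mul_self_eq ha hac)

theorem mul_sq_mul_self_eq (ha : a * a = 1) (hac : (a * c) ^ 3 = 1) :
    a * c ^ 2 * a = c⁻¹ * a * (c ^ 2)⁻¹ * a * c⁻¹ := by
  calc a * c ^ 2 * a = (a * c * a) * (a * c * a) := by simp [pow_two, mul_assoc, mul_self_mul ha]
    _ = _ := by rw [mul_mul_self_eq ha hac]; group

theorem mul_cube_mul_self_eq (ha : a * a = 1) (hac : (a * c) ^ 3 = 1) :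
    a * c ^ 3 * a = c⁻¹ * a * (c ^ 2)⁻¹ * a * (c ^ 2)⁻¹ * a * c⁻¹ := by
  calc a * c ^ 3 * a = (a * c ^ 2 * a) * (a * c * a) := by
        simp [pow_succ, mul_assoc, mul_self_mul ha]
    _ = _ := by rw [mul_mul_self_eq ha hac, mul_sq_mul_self_eq ha hac]; group

/-- The element of the triangle group with generators `a`, `c` of orders `2`, `7` that becomes a
translation of the projective line over `𝔽₈`, fixing the same point `∞` as `c`. -/
def unipotent (a c : G) : G := a * c ^ 2 * a * (c ^ 2)⁻¹ * a

theorem unipotent_mul_self (ha : a * a = 1) : unipotent a c * unipotent a c = 1 := by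
  simp [unipotent, mul_assoc, mul_self_mul ha, ha]

theorem unipotent_eq (ha : a * a = 1) (hac : (a * c) ^ 3 = 1) :
    unipotent a c = c⁻¹ * a * (c ^ 2)⁻¹ * a * (c ^ 3)⁻¹ * a := by
  rw [unipotent, mul_sq_mul_self_eq ha hac]
  group

theorem mul_inv_sq_mul_self_eq (ha : a * a = 1) :
    a * (c ^ 2)⁻¹ * a = (c ^ 2)⁻¹ * a * unipotent a c := by
  simp [unipotent, mul_assoc, mul_self_mul ha]

theorem mul_inv_cube_mul_self_eq (ha : a * a = 1) (hac : (a * c) ^ 3 = 1) :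
    a * (c ^ 3)⁻¹ * a = c ^ 2 * a * c * unipotent a c := by
  simp [unipotent_eq ha hac, pow_succ, mul_assoc, mul_self_mul ha]

theorem unipotent_mul_sq_mul_unipotent (ha : a * a = 1) (hc : c ^ 7 = 1) (hac : (a * c) ^ 3 = 1)
    (hS : (a * c ^ 2 * a * c ^ 4 * a * c ^ 4) ^ 2 = 1) :
    unipotent a c * c ^ 2 * unipotent a c = c ^ 3 * unipotent a c * c⁻¹ := by
  have hc4 : c ^ 4 = (c ^ 3)⁻¹ := pow_eq_inv_pow_of_pow_add_eq_one hc
  have h3 := mul_inv_cube_mul_self_eq ha hac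
  set u := unipotent a c with hu
  set w := a * c ^ 2 * a * c ^ 4 * a * c ^ 4 with hw
  have hw_eq : w = c ^ 2 * a * (c * u * c * u * c ^ 4) := by
    calc w = a * c ^ 2 * (a * (c ^ 3)⁻¹ * a) * c ^ 4 := by simp only [hw, hc4, mul_assoc]
      _ = a * c ^ 4 * a * c * u * c ^ 4 := by
        rw [h3, show c ^ 4 = c ^ 2 * c ^ 2 from pow_add c 2 2]; simp only [mul_assoc]
      _ = c ^ 2 * a * (c * u * c * u * c ^ 4) := by
        nth_rw 1 [hc4]; rw [h3]; simp only [mul_assoc]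
  have hw_mul : w * (c ^ 2 * a) = u * c := by
    calc w * (c ^ 2 * a) = a * c ^ 2 * a * (c ^ 3)⁻¹ * (a * c⁻¹ * a) := by rw [hw, hc4]; group
      _ = a * c ^ 2 * (a * (c ^ 2)⁻¹ * a) * c := by rw [mul_inv_mul_self_eq ha hac]; group
      _ = u * c := by
        rw [mul_inv_sq_mul_self_eq ha, ← hu]; simp [mul_assoc, mul_self_mul ha]
  have hone : (u * c ^ 2 * u) * (c * u * (c ^ 3)⁻¹) = 1 := by
    calc (u * c ^ 2 * u) * (c * u * (c ^ 3)⁻¹) = (u * c) * (c * u * c * u * c ^ 4) := by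
          rw [hc4]; simp only [pow_two, mul_assoc]
      _ = w * w := by rw [← hw_mul, mul_assoc w, ← hw_eq]
      _ = 1 := by rw [← pow_two, hS]
  rw [eq_inv_of_mul_eq_one_left hone]
  simp [inv_eq_of_mul_eq_one_left (unipotent_mul_self (c := c) ha), u, mul_assoc]

end Triangle

section Orbit

variable {G X : Type*} [Group G] [MulAction G X] {a c : G} {p : X}

theorem smul_inv_sq_smul (ha : a * a = 1) (hu : unipotent a c • p = p) :
    a • (c ^ 2)⁻¹ • a • p = (c ^ 2)⁻¹ • a • p := by
  simp only [unipotent, mul_smul] at hu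
  rwa [← eq_inv_smul_iff, inv_eq_of_mul_eq_one_left ha, ← eq_inv_smul_iff] at hu

theorem smul_sq_smul (ha : a * a = 1) (hac : (a * c) ^ 3 = 1) (hp : c • p = p)
    (hu : unipotent a c • p = p) : a • c ^ 2 • a • p = (c ^ 3)⁻¹ • a • p := by
  calc a • c ^ 2 • a • p = c⁻¹ • a • (c ^ 2)⁻¹ • a • c⁻¹ • p := by
        simpa only [mul_smul] using congrArg (· • p) (mul_sq_mul_self_eq ha hac)
    _ = (c ^ 3)⁻¹ • a • p := by
        rw [inv_smul_eq_iff.2 hp.symm, smul_inv_sq_smul ha hu, smul_smul]; group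

theorem smul_smul_cube_smul (ha : a * a = 1) (hc : c ^ 7 = 1) (hac : (a * c) ^ 3 = 1)
    (hp : c • p = p) (hu : unipotent a c • p = p) :
    c • a • c ^ 3 • a • p = a • c ^ 3 • a • p := by
  calc c • a • c ^ 3 • a • p = c • c⁻¹ • a • (c ^ 2)⁻¹ • a • (c ^ 2)⁻¹ • a • c⁻¹ • p := by
        congr 1
        simpa only [mul_smul] using congrArg (· • p) (mul_cube_mul_self_eq ha hac)
    _ = a • ((c ^ 2)⁻¹ * (c ^ 2)⁻¹) • a • p := by
        rw [inv_smul_eq_iff.2 hp.symm, smul_inv_sq_smul ha hu, smul_inv_smul, mul_smul]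
    _ = a • c ^ 3 • a • p := by
        rw [← mul_inv_rev, ← pow_add, ← pow_eq_inv_pow_of_pow_add_eq_one (m := 3) hc]

/-- Under the `(2,3,7)` relations for `a` and `c`, a set containing the orbit of a point `p` fixed
by `c` and `unipotent a c`. For the action on the projective line over `𝔽₈` and `p = ∞`, the points
`a • c ^ 3 • a • p` and `c ^ i • a • p` are `0` and the elements of `𝔽₈ˣ`. -/
def projectiveLine (a c : G) (p : X) : Set X :=
  {p, a • c ^ 3 • a • p} ∪ (· • a • p) '' (zpowers c : Set G)

theorem finite_projectiveLine {n : ℕ} [NeZero n] (hc : c ^ n = 1) :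
    (projectiveLine a c p).Finite := by
  obtain ⟨hfin, -⟩ := finite_card_zpowers_le hc
  exact (Set.toFinite _).union ((Set.toFinite _).image _)

theorem ncard_projectiveLine_le {n : ℕ} [NeZero n] (hc : c ^ n = 1) :
    (projectiveLine a c p).ncard ≤ 2 + n := by
  obtain ⟨hfin, hle⟩ := finite_card_zpowers_le hc
  exact (Set.ncard_union_le _ _).trans <| Nat.add_le_add (Set.ncard_insert_le _ {_} |>.trans
    (by rw [Set.ncard_singleton])) ((Set.ncard_image_le (Set.toFinite _)).trans hle)

theorem smul_mem_projectiveLine_right (ha : a * a = 1) (hc : c ^ 7 = 1) (hac : (a * c) ^ 3 = 1)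
    (hp : c • p = p) (hu : unipotent a c • p = p) {x : X} (hx : x ∈ projectiveLine a c p) :
    c • x ∈ projectiveLine a c p := by
  rcases hx with (rfl | rfl) | ⟨g, hg, rfl⟩
  · rw [hp]; exact .inl (.inl rfl)
  · rw [smul_smul_cube_smul ha hc hac hp hu]; exact .inl (.inr rfl)
  · exact .inr ⟨c * g, mul_mem (mem_zpowers c) hg, mul_smul c g _⟩

theorem smul_mem_projectiveLine_left (ha : a * a = 1) (hc : c ^ 7 = 1) (hac : (a * c) ^ 3 = 1)
    (hp : c • p = p) (hu : unipotent a c • p = p) {x : X} (hx : x ∈ projectiveLine a c p) :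
    a • x ∈ projectiveLine a c p := by
  have haa (y : X) : a • a • y = y := by rw [smul_smul, ha, one_smul]
  have mem (g : G) (hg : g ∈ zpowers c) : g • a • p ∈ projectiveLine a c p := .inr ⟨g, hg, rfl⟩
  have hcz := mem_zpowers c
  rcases hx with (rfl | rfl) | ⟨g, hg, rfl⟩
  · simpa using mem 1 (one_mem _)
  · rw [haa]; exact mem _ (pow_mem hcz 3)
  obtain ⟨i, hi, rfl⟩ := exists_pow_eq_of_mem_zpowers hc hg
  have h4 : c ^ 4 = (c ^ 3)⁻¹ := pow_eq_inv_pow_of_pow_add_eq_one hc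
  have h5 : c ^ 5 = (c ^ 2)⁻¹ := pow_eq_inv_pow_of_pow_add_eq_one hc
  have h6 : c ^ 6 = c⁻¹ := eq_inv_of_mul_eq_one_left (by rw [← pow_succ, hc])
  change a • c ^ i • a • p ∈ _
  interval_cases i
  · rw [pow_zero, one_smul, haa]; exact .inl (.inl rfl)
  · have h : a • c • a • p = c⁻¹ • a • c⁻¹ • p := by
      simpa only [mul_smul] using congrArg (· • p) (mul_mul_self_eq ha hac)
    rw [pow_one, h, inv_smul_eq_iff.2 hp.symm]
    exact mem _ (inv_mem hcz)
  · rw [smul_sq_smul ha hac hp hu]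
    exact mem _ (inv_mem (pow_mem hcz 3))
  · exact .inl (.inr rfl)
  · rw [h4, ← smul_sq_smul ha hac hp hu, haa]
    exact mem _ (pow_mem hcz 2)
  · rw [h5, smul_inv_sq_smul ha hu]
    exact mem _ (inv_mem (pow_mem hcz 2))
  · have h : a • c⁻¹ • a • p = c • a • c • p := by
      simpa only [mul_smul] using congrArg (· • p) (mul_inv_mul_self_eq ha hac)
    rw [h6, h, hp]
    exact mem _ hcz

end Orbit

section Bruhat

variable {G : Type*} [Group G] {u c : G}

theorem mul_inv_mul_mem_doubleCoset {P : Subgroup G} {g : G} (hu : u * u = 1)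
    (hg : u * g * u ∈ doubleCoset u (P : Set G) P) :
    u * g⁻¹ * u ∈ doubleCoset u (P : Set G) P := by
  obtain ⟨x, hx, y, hy, h⟩ := mem_doubleCoset.1 hg
  refine mem_doubleCoset.2 ⟨y⁻¹, P.inv_mem hy, x⁻¹, P.inv_mem hx, ?_⟩
  simpa [mul_assoc, inv_eq_of_mul_eq_one_left hu] using congrArg (·⁻¹) h

theorem mul_mul_mem_of_mem_zpowers (hu : u * u = 1) (hc : c ^ 7 = 1)
    (h : u * c ^ 2 * u = c ^ 3 * u * c⁻¹) {g : G} (hg : g ∈ zpowers c) :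
    u * g * u ∈ (zpowers c ∪ doubleCoset u (zpowers c) (zpowers c) : Set G) := by
  have hcz := mem_zpowers c
  have h2 : u * c ^ 2 * u ∈ doubleCoset u (zpowers c : Set G) (zpowers c) :=
    mem_doubleCoset.2 ⟨_, pow_mem hcz 3, _, inv_mem hcz, h⟩
  have h3 : u * c ^ 3 * u ∈ doubleCoset u (zpowers c : Set G) (zpowers c) :=
    mem_doubleCoset.2 ⟨_, pow_mem hcz 2, _, hcz, by
      calc u * c ^ 3 * u = u * (c ^ 3 * u * c⁻¹) * c := by group
        _ = c ^ 2 * u * c := by rw [← h]; simp [mul_assoc, mul_self_mul hu]⟩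
  have h1 : u * c⁻¹ * u ∈ doubleCoset u (zpowers c : Set G) (zpowers c) :=
    mem_doubleCoset.2 ⟨_, inv_mem (pow_mem hcz 3), _, pow_mem hcz 2, by
      calc u * c⁻¹ * u = (c ^ 3)⁻¹ * (c ^ 3 * u * c⁻¹) * u := by group
        _ = (c ^ 3)⁻¹ * u * c ^ 2 := by rw [← h]; simp [mul_assoc, hu]⟩
  obtain ⟨i, hi, rfl⟩ := exists_pow_eq_of_mem_zpowers hc hg
  have hc4 : c ^ 4 = (c ^ 3)⁻¹ := pow_eq_inv_pow_of_pow_add_eq_one hc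
  have hc5 : c ^ 5 = (c ^ 2)⁻¹ := pow_eq_inv_pow_of_pow_add_eq_one hc
  have hc6 : c ^ 6 = c⁻¹ := eq_inv_of_mul_eq_one_left (by rw [← pow_succ, hc])
  interval_cases i
  · exact .inl (by simp [hu])
  · exact .inr (by simpa using mul_inv_mul_mem_doubleCoset hu h1)
  · exact .inr h2
  · exact .inr h3
  · exact .inr (hc4 ▸ mul_inv_mul_mem_doubleCoset hu h3)
  · exact .inr (hc5 ▸ mul_inv_mul_mem_doubleCoset hu h2)
  · exact .inr (hc6 ▸ h1)

end Bruhat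

section UpperBound

variable {G : Type*} [Group G] {a b c : G}

/-- The subgroup that becomes the affine group `AGL₁(𝔽₈)`, the stabilizer of `∞` in `SL₂(𝔽₈)`. -/
def borelSubgroup (a c : G) : Subgroup G := closure (insert (unipotent a c) (zpowers c : Set G))

theorem finite_card_borelSubgroup_le (ha : a * a = 1) (hc : c ^ 7 = 1) (hac : (a * c) ^ 3 = 1)
    (hS : (a * c ^ 2 * a * c ^ 4 * a * c ^ 4) ^ 2 = 1) :
    Finite (borelSubgroup a c) ∧ Nat.card (borelSubgroup a c) ≤ 56 := by
  obtain ⟨hfinC, h7⟩ := finite_card_zpowers_le hc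
  obtain ⟨hfin, hle⟩ := finite_card_closure_insert_le (zpowers c) (unipotent a c) fun g hg =>
    mul_mul_mem_of_mem_zpowers (unipotent_mul_self ha) hc
      (unipotent_mul_sq_mul_unipotent ha hc hac hS) hg
  exact ⟨hfin, hle.trans (Nat.add_le_add h7 (Nat.mul_le_mul h7 h7))⟩

theorem finite_card_quotient_borelSubgroup_le (ha : a * a = 1) (hc : c ^ 7 = 1)
    (hac : (a * c) ^ 3 = 1) (hgen : closure {a, c} = ⊤) :
    Finite (G ⧸ borelSubgroup a c) ∧ Nat.card (G ⧸ borelSubgroup a c) ≤ 9 := by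
  have fix {g : G} (hg : g ∈ borelSubgroup a c) :
      g • ((1 : G) : G ⧸ borelSubgroup a c) = (1 : G) := by
    rw [MulAction.Quotient.smul_coe, smul_eq_mul, mul_one]
    exact QuotientGroup.eq.2 (by simpa using hg)
  have hcfix := fix (subset_closure (.inr (mem_zpowers c)))
  have hufix := fix (subset_closure (Set.mem_insert _ _))
  obtain ⟨hfin, hle⟩ := finite_card_quotient_le hgen
    (finite_projectiveLine (a := a) (p := ((1 : G) : G ⧸ borelSubgroup a c)) hc)
    (.inl (.inl rfl)) (by
    rintro t (ht | ht) x hx <;> rw [ht]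
    · exact smul_mem_projectiveLine_left ha hc hac hcfix hufix hx
    · exact smul_mem_projectiveLine_right ha hc hac hcfix hufix hx)
  exact ⟨hfin, hle.trans (ncard_projectiveLine_le hc)⟩

theorem finite_card_le (ha : a * a = 1) (hc : c ^ 7 = 1) (hac : (a * c) ^ 3 = 1)
    (hS : (a * c ^ 2 * a * c ^ 4 * a * c ^ 4) ^ 2 = 1)
    (hgen : closure {a, c} = ⊤) : Finite G ∧ Nat.card G ≤ 504 := by
  obtain ⟨hfinK, hK⟩ := finite_card_borelSubgroup_le ha hc hac hS
  obtain ⟨hfinQ, hQ⟩ := finite_card_quotient_borelSubgroup_le ha hc hac hgen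
  have hcard := card_eq_card_quotient_mul_card_subgroup (borelSubgroup a c)
  refine ⟨Nat.finite_of_card_ne_zero ?_, ?_⟩
  · rw [hcard]; exact Nat.mul_ne_zero Nat.card_pos.ne' Nat.card_pos.ne'
  · rw [hcard]; exact Nat.mul_le_mul hQ hK

theorem mul_pow_three_eq_one (ha : a * a = 1) (hb : (a * c⁻¹) ^ 3 = 1) : (a * c) ^ 3 = 1 := by
  have hinv : (a * c⁻¹)⁻¹ = c * a := by simp [inv_eq_of_mul_eq_one_left ha]
  calc (a * c) ^ 3 = (a * (c * a) * a⁻¹) ^ 3 := by simp [mul_assoc]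
    _ = 1 := by rw [conj_pow, ← hinv, inv_pow, hb, inv_one, mul_one, mul_inv_cancel]

theorem mirror_eq_conj (ha : a * a = 1) (hb : (a * c⁻¹) ^ 3 = 1) :
    (a * c⁻¹) ^ 2 * c * (a * c⁻¹) ^ 2 * c ^ 4 * (a * c⁻¹) * c ^ 4 =
      c * (a * c ^ 2 * a * c ^ 4 * a * c ^ 4) * c⁻¹ := by
  have hsq : (a * c⁻¹) ^ 2 = c * a := by
    rw [pow_eq_inv_pow_of_pow_add_eq_one (n := 1) hb]
    simp [inv_eq_of_mul_eq_one_left ha]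
  rw [hsq, pow_two c]
  group

theorem finite_card_le_of_hurwitz (ha : a ^ 2 = 1) (hb : b ^ 3 = 1) (hc : c ^ 7 = 1)
    (habc : a * b * c = 1)
    (hS : (b ^ 2 * c * b ^ 2 * c ^ 4 * b * c ^ 4) ^ 2 = 1) (hgen : closure {a, b, c} = ⊤) :
    Finite G ∧ Nat.card G ≤ 504 := by
  rw [pow_two] at ha
  obtain rfl : b = a * c⁻¹ := by
    rw [eq_mul_inv_iff_mul_eq, ← mul_self_mul ha (b * c), ← mul_assoc a b, habc, mul_one]
  refine finite_card_le ha hc (mul_pow_three_eq_one ha hb) ?_ ?_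
  · rwa [mirror_eq_conj ha hb, conj_pow, conj_eq_one_iff] at hS
  · refine top_le_iff.1 (hgen ▸ (closure_le _).2 ?_)
    have hmem : a ∈ closure {a, c} ∧ c ∈ closure {a, c} :=
      ⟨subset_closure (.inl rfl), subset_closure (.inr rfl)⟩
    rintro g (rfl | rfl | rfl)
    exacts [hmem.1, mul_mem hmem.1 (inv_mem hmem.2), hmem.2]

theorem finite_card_presentedGroup_le :
    Finite (PresentedGroup (hurwitzRels 2)) ∧
      Nat.card (PresentedGroup (hurwitzRels 2)) ≤ 504 := by
  have rel {r} (hr : r ∈ hurwitzRels 2) : PresentedGroup.mk (hurwitzRels 2) r = 1 :=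
    PresentedGroup.one_of_mem hr
  refine finite_card_le_of_hurwitz (a := .of 0) (b := .of 1) (c := .of 2) (rel (.inl rfl))
    (rel (.inr (.inl rfl))) (rel (.inr (.inr (.inl rfl)))) (rel (.inr (.inr (.inr (.inl rfl)))))
    (rel (.inr (.inr (.inr (.inr rfl))))) ?_
  refine top_le_iff.1 (PresentedGroup.closure_range_of (hurwitzRels 2) ▸ closure_mono ?_)
  rintro _ ⟨i, rfl⟩
  fin_cases i <;> simp

end UpperBound

section LowerBound

/-- The action of `A` on the points of `projectiveLine`: for `i < 7` the label `i` stands for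
`c ^ i • a • p`, while `7` stands for `p` and `8` for `a • c ^ 3 • a • p`. -/
def permA : Equiv.Perm (Fin 9) := c[7, 0] * c[1, 6] * c[2, 4] * c[3, 8]

/-- The action of `C` on the points of `projectiveLine`, labelled as for `permA`. -/
def permC : Equiv.Perm (Fin 9) := c[0, 1, 2, 3, 4, 5, 6]

theorem isMultiplyPretransitive_closure_permA_permC :
    MulAction.IsMultiplyPretransitive (closure {permA, permC}) (Fin 9) 3 := by
  have hA : permA ∈ closure {permA, permC} := subset_closure (.inl rfl)
  have hC : permC ∈ closure {permA, permC} := subset_closure (.inr rfl)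
  have hU : unipotent permA permC ∈ closure {permA, permC} :=
    mul_mem (mul_mem (mul_mem (mul_mem hA (pow_mem hC 2)) hA) (inv_mem (pow_mem hC 2))) hA
  have to_seven : ∀ x, ∃ i j : Fin 7,
      (permA * permC ^ (i : ℕ) * permA * permC ^ (j : ℕ)) x = 7 := by decide +kernel
  have to_eight : ∀ x ≠ 7, ∃ i : Fin 2, ∃ j : Fin 7,
      (unipotent permA permC ^ (i : ℕ) * permC ^ (j : ℕ)) 7 = 7 ∧
      (unipotent permA permC ^ (i : ℕ) * permC ^ (j : ℕ)) x = 8 := by decide +kernel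
  have to_zero : ∀ x, x ≠ 7 → x ≠ 8 → ∃ i : Fin 7,
      (permC ^ (i : ℕ)) 7 = 7 ∧ (permC ^ (i : ℕ)) 8 = 8 ∧ (permC ^ (i : ℕ)) x = 0 := by
    decide +kernel
  refine isMultiplyPretransitive_three (a := 7) (b := 8) (c := 0)
    (fun x => ?_) (fun x hx => ?_) (fun x hx hx' => ?_)
  · obtain ⟨i, j, h⟩ := to_seven x
    exact ⟨⟨_, mul_mem (mul_mem (mul_mem hA (pow_mem hC i)) hA) (pow_mem hC j)⟩, h⟩
  · obtain ⟨i, j, h⟩ := to_eight x hx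
    exact ⟨⟨_, mul_mem (pow_mem hU i) (pow_mem hC j)⟩, h⟩
  · obtain ⟨i, h⟩ := to_zero x hx hx'
    exact ⟨⟨_, pow_mem hC i⟩, h⟩

theorem dvd_card_closure_permA_permC : 504 ∣ Nat.card (closure {permA, permC}) := by
  have := isMultiplyPretransitive_closure_permA_permC
  simpa [Nat.descFactorial] using
    descFactorial_card_dvd_card (G := closure {permA, permC}) (X := Fin 9) (n := 3) (by simp)

theorem lift_perm_eq_one :
    ∀ r ∈ hurwitzRels 2, FreeGroup.lift ![permA, (permC * permA)⁻¹, permC] r = 1 := by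
  intro r hr
  simp only [hurwitzRels, Set.mem_insert_iff, Set.mem_singleton_iff] at hr
  rcases hr with rfl | rfl | rfl | rfl | rfl <;>
    simp only [map_mul, map_pow, FreeGroup.lift_apply_of] <;> decide +kernel

theorem dvd_card_presentedGroup : 504 ∣ Nat.card (PresentedGroup (hurwitzRels 2)) := by
  let φ := PresentedGroup.toGroup lift_perm_eq_one
  have hle : closure {permA, permC} ≤ φ.range := by
    rw [closure_le, Set.pair_subset_iff]
    exact ⟨⟨.of 0, PresentedGroup.toGroup.of _⟩, ⟨.of 2, PresentedGroup.toGroup.of _⟩⟩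
  exact dvd_card_closure_permA_permC.trans ((card_dvd_of_le hle).trans (card_range_dvd φ))

end LowerBound

end Macbeath

theorem stmt_14 : Nat.card (PresentedGroup (hurwitzRels 2)) = 504 := by
  obtain ⟨hfin, hle⟩ := Macbeath.finite_card_presentedGroup_le
  exact le_antisymm hle (Nat.le_of_dvd Nat.card_pos Macbeath.dvd_card_presentedGroup)
end

section
/- Let H be the group with presentation ⟨A, B, C | A² = B³ = C⁷ = ABC = (B²CB²C⁴BC⁴)³ = 1⟩. Then H has order 168. -/
/-!
Write `a`, `v` for the images of `A`, `C` and `h = v³ S v⁻³`. The relations of the triangle group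
alone show that `h` is unchanged when `v` is replaced by `v⁻¹`, and that `(h v³)³ = 1`. If `h³ = 1`,
then `(h v³)³ = (h v⁻³)³ = 1` forces `v` to commute with `h v h⁻¹`. The element `v⁻² · h v h⁻¹` is
then centralized by `v` and inverted by `a`; since `v a` has odd order it squares to `1`, and since
its seventh power is `1` too, `h v h⁻¹ = v²`. So `B = ⟨h⟩⟨v⟩` has at most `21` elements, and the
Bruhat decomposition `G = B ∪ B a ⟨v⟩` gives `|G| ≤ 21 + 21 · 7 = 168`. Conversely, the action on
the projective line over `𝔽₇` shows that `3`, `7` and `8` divide `|G|`.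
-/

open scoped Pointwise

section Group

variable {G : Type*} [Group G]

theorem sq_eq_one_of_semiconjBy_inv {x g : G} {n : ℕ} (hn : Odd n) (hx : x ^ n = 1)
    (h : SemiconjBy x g g⁻¹) : g ^ 2 = 1 := by
  obtain ⟨k, rfl⟩ := hn
  have h_sq : SemiconjBy (x ^ 2) g g := by simpa [sq] using h.inv_right.mul_left h
  have h_one : SemiconjBy (x ^ (2 * k + 1)) g g⁻¹ := by
    rw [pow_succ', pow_mul]
    exact h.mul_left (Commute.pow_left h_sq k)
  have h_inv : g = g⁻¹ := by simpa [hx, SemiconjBy] using h_one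
  rw [sq]
  exact eq_inv_iff_mul_eq_one.mp h_inv

section CubeEqOne

variable {h w : G} (hh : h ^ 3 = 1) (hw : (h * w) ^ 3 = 1)
include hh hw

theorem conj_mul_conj_inv_mul_self : h * w * h⁻¹ * (h⁻¹ * w * h) * w = 1 := by
  have h_inv : h⁻¹ * h⁻¹ = h := by
    rw [← mul_inv_rev, inv_eq_iff_mul_eq_one, ← sq, ← pow_succ, hh]
  calc h * w * h⁻¹ * (h⁻¹ * w * h) * w = h * w * (h⁻¹ * h⁻¹) * w * h * w := by group
    _ = (h * w) ^ 3 := by rw [h_inv]; simp only [pow_succ, pow_zero, one_mul, mul_assoc]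
    _ = 1 := hw

theorem conj_inv_eq_inv_mul_conj : h⁻¹ * w * h = (w * (h * w * h⁻¹))⁻¹ := by
  have h_one := conj_mul_conj_inv_mul_self hh hw
  rw [mul_assoc, mul_eq_one_comm, mul_assoc] at h_one
  exact eq_inv_of_mul_eq_one_left h_one

theorem commute_conj_self (hw' : (h * w⁻¹) ^ 3 = 1) : Commute w (h * w * h⁻¹) := by
  have h_inv : h⁻¹ * w * h = (h * w * h⁻¹ * w)⁻¹ := by
    simpa [mul_assoc] using congrArg (·⁻¹) (conj_inv_eq_inv_mul_conj hh hw')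
  exact inv_injective ((conj_inv_eq_inv_mul_conj hh hw).symm.trans h_inv)

end CubeEqOne

end Group

/-- The images `a`, `v` of `A`, `C` in a quotient of the `(2,3,7)` triangle group; the image of `B`
is `(v * a)⁻¹`, so it is left out. -/
structure IsHurwitzPair {G : Type*} [Group G] (a v : G) : Prop where
  sq_eq_one : a ^ 2 = 1
  pow_seven_eq_one : v ^ 7 = 1
  mul_pow_three_eq_one : (v * a) ^ 3 = 1

/-- A conjugate of the mirror automorphism `S`; in `PSL(2,7)`, with `v` unipotent and `a` the Weyl
element, it generates the diagonal torus. -/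
def torus {G : Type*} [Group G] (a v : G) : G :=
  (v ^ 3)⁻¹ * a * v ^ 2 * a * (v ^ 3)⁻¹ * a

/-- The subgroup generated by `v` and its normalizing element `torus a v`; in `PSL(2,7)` it is the
upper triangular subgroup. -/
def borelSubgroup {G : Type*} [Group G] (a v : G) : Subgroup G :=
  Subgroup.zpowers (torus a v) ⊔ Subgroup.zpowers v

/-- The nontrivial Bruhat double coset `B a B`, where `B = borelSubgroup a v`, written as
`B a U` with `U = ⟨v⟩`. -/
def bigCell {G : Type*} [Group G] (a v : G) : Set G :=
  (borelSubgroup a v : Set G) * {a} * (Subgroup.zpowers v : Set G)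

section BruhatCells

variable {G : Type*} [Group G] {a v : G}

theorem zpowers_le_borelSubgroup : Subgroup.zpowers v ≤ borelSubgroup a v :=
  le_sup_right

theorem torus_mem_borelSubgroup : torus a v ∈ borelSubgroup a v :=
  Subgroup.mem_sup_left (Subgroup.mem_zpowers _)

theorem mem_bigCell {g : G} :
    g ∈ bigCell a v ↔ ∃ b ∈ borelSubgroup a v, ∃ u ∈ Subgroup.zpowers v, b * a * u = g := by
  simp [bigCell, Set.mem_mul, -Set.mul_singleton]

theorem mul_mem_bigCell {b g : G} (hb : b ∈ borelSubgroup a v) (hg : g ∈ bigCell a v) :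
    b * g ∈ bigCell a v := by
  obtain ⟨c, hc, u, hu, rfl⟩ := mem_bigCell.mp hg
  exact mem_bigCell.mpr ⟨b * c, mul_mem hb hc, u, hu, by simp only [mul_assoc]⟩

end BruhatCells

namespace IsHurwitzPair

variable {G : Type*} [Group G] {a v : G} (hp : IsHurwitzPair a v)
include hp

theorem mul_self : a * a = 1 := by
  rw [← sq, hp.sq_eq_one]

theorem mul_mul_self (x : G) : a * (a * x) = x := by
  rw [← mul_assoc, hp.mul_self, one_mul]

theorem inv_eq_self : a⁻¹ = a :=
  inv_eq_of_mul_eq_one_left hp.mul_self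

protected theorem inv : IsHurwitzPair a v⁻¹ where
  sq_eq_one := hp.sq_eq_one
  pow_seven_eq_one := by rw [inv_pow, hp.pow_seven_eq_one, inv_one]
  mul_pow_three_eq_one := by
    have h_conj : v⁻¹ * a = a * (v * a)⁻¹ * a⁻¹ := by simp [hp.inv_eq_self, hp.mul_mul_self]
    rw [h_conj, conj_pow, inv_pow, hp.mul_pow_three_eq_one, inv_one, mul_one, mul_inv_cancel]

theorem mul_mul_eq_conj_inv : v * a * v = a * v⁻¹ * a := by
  calc v * a * v = (v * a) ^ 3 * (a * v * a)⁻¹ := by simp [pow_succ, mul_assoc]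
    _ = a * v⁻¹ * a := by
      rw [hp.mul_pow_three_eq_one, one_mul]
      simp [mul_assoc, hp.inv_eq_self]

theorem mul_conj_sq_mul_eq_conj_inv_sq : v * a * v ^ 2 * a * v = a * (v ^ 2)⁻¹ * a := by
  calc v * a * v ^ 2 * a * v = (v * a * v) * (v * a * v) := by simp only [sq, mul_assoc]
    _ = a * (v ^ 2)⁻¹ * a := by
      rw [hp.mul_mul_eq_conj_inv]
      simp [sq, mul_assoc, hp.mul_mul_self]

theorem torus_inv : torus a v⁻¹ = torus a v := by
  have h_inv : (v ^ 3)⁻¹ = v ^ 3 * v :=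
    inv_eq_of_mul_eq_one_right (by rw [← pow_succ, ← pow_add, hp.pow_seven_eq_one])
  have h_inv' : (v ^ 3)⁻¹ = v * v ^ 3 := by rw [h_inv, ← pow_succ, pow_succ']
  calc torus a v⁻¹ = v ^ 3 * (a * (v ^ 2)⁻¹ * a) * v ^ 3 * a := by simp [torus, mul_assoc]
    _ = (v ^ 3 * v) * a * v ^ 2 * a * (v * v ^ 3) * a := by
      simp only [← hp.mul_conj_sq_mul_eq_conj_inv_sq, mul_assoc]
    _ = torus a v := by rw [torus, ← h_inv, ← h_inv']

theorem torus_eq : torus a v = v ^ 3 * a * (v ^ 2)⁻¹ * a * v ^ 3 * a := by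
  rw [← hp.torus_inv]
  simp only [torus, inv_pow, inv_inv]

theorem torus_mul_cube_pow_three : (torus a v * v ^ 3) ^ 3 = 1 := by
  have h_conj : torus a v * v ^ 3 =
      (v ^ 3)⁻¹ * a * v ^ 2 * (v * a)⁻¹ * ((v ^ 3)⁻¹ * a * v ^ 2)⁻¹ := by
    simp [torus, pow_succ, mul_assoc, hp.inv_eq_self]
  rw [h_conj, conj_pow, inv_pow, hp.mul_pow_three_eq_one, inv_one, mul_one, mul_inv_cancel]

theorem torus_mul_inv_cube_pow_three : (torus a v * (v ^ 3)⁻¹) ^ 3 = 1 := by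
  simpa only [hp.torus_inv, inv_pow] using hp.inv.torus_mul_cube_pow_three

theorem conj_sq_mul_torus_mul_inv :
    a * (v ^ 2 * torus a v * v⁻¹) * a = v * (torus a v)⁻¹ * (v ^ 2)⁻¹ := by
  have h_conj : v ^ 2 * torus a v * v⁻¹ * a = v⁻¹ * a * v ^ 2 * a * (v⁻¹ * a * v ^ 2)⁻¹ := by
    calc v ^ 2 * torus a v * v⁻¹ * a = v⁻¹ * a * v ^ 2 * a * (v ^ 3)⁻¹ * (a * v⁻¹ * a) := by
          simp [torus, pow_succ, mul_assoc]
      _ = v⁻¹ * a * v ^ 2 * a * (v⁻¹ * a * v ^ 2)⁻¹ := by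
          rw [← hp.mul_mul_eq_conj_inv]
          simp [pow_succ, mul_assoc, hp.inv_eq_self]
  have h_sq : v ^ 2 * torus a v * v⁻¹ * (a * (v ^ 2 * torus a v * v⁻¹) * a) = 1 := by
    calc _ = (v ^ 2 * torus a v * v⁻¹ * a) ^ 2 := by simp only [sq _, mul_assoc]
      _ = 1 := by rw [h_conj, conj_pow, hp.sq_eq_one, mul_one, mul_inv_cancel]
  calc _ = (v ^ 2 * torus a v * v⁻¹)⁻¹ := eq_inv_of_mul_eq_one_right h_sq
    _ = v * (torus a v)⁻¹ * (v ^ 2)⁻¹ := by simp only [mul_inv_rev, inv_inv, mul_assoc]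

theorem conj_sq_mul_inv_torus_mul_cube :
    a * (v ^ 2 * (torus a v)⁻¹ * v ^ 3) * a = v ^ 3 * torus a v * v ^ 2 := by
  nth_rw 1 [hp.torus_eq]
  simp [torus, pow_succ, mul_assoc, hp.inv_eq_self, hp.mul_self]

theorem cube_pow_five : (v ^ 3) ^ 5 = v := by
  rw [← pow_mul, pow_succ, pow_mul v 7 2, hp.pow_seven_eq_one, one_pow, one_mul]

protected theorem isOfFinOrder : IsOfFinOrder v :=
  isOfFinOrder_iff_pow_eq_one.mpr ⟨7, by decide, hp.pow_seven_eq_one⟩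

theorem natCard_zpowers_le : Nat.card (Subgroup.zpowers v) ≤ 7 :=
  (Nat.card_zpowers v).trans_le (orderOf_le_of_pow_eq_one (by decide) hp.pow_seven_eq_one)

section TorusPowThree

variable (hh : torus a v ^ 3 = 1)
include hh

theorem commute_torus_conj : Commute v (torus a v * v * (torus a v)⁻¹) := by
  have h_cube := commute_conj_self hh hp.torus_mul_cube_pow_three hp.torus_mul_inv_cube_pow_three
  have h_pow := h_cube.pow_pow 5 5
  rwa [conj_pow, hp.cube_pow_five] at h_pow

theorem inv_torus_conj :
    (torus a v)⁻¹ * v * torus a v = (v * (torus a v * v * (torus a v)⁻¹))⁻¹ := by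
  have h_cube := commute_conj_self hh hp.torus_mul_cube_pow_three hp.torus_mul_inv_cube_pow_three
  have h_conj :
      ((torus a v)⁻¹ * v ^ 3 * torus a v) ^ 5 = (torus a v)⁻¹ * (v ^ 3) ^ 5 * torus a v := by
    simpa only [inv_inv] using conj_pow (a := (torus a v)⁻¹) (b := v ^ 3) (i := 5)
  rw [conj_inv_eq_inv_mul_conj hh hp.torus_mul_cube_pow_three, inv_pow, h_cube.mul_pow, conj_pow,
    hp.cube_pow_five] at h_conj
  exact h_conj.symm

theorem semiconjBy_inv_sq_mul_torus_conj :
    SemiconjBy a ((v ^ 2)⁻¹ * (torus a v * v * (torus a v)⁻¹))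
      ((v ^ 2)⁻¹ * (torus a v * v * (torus a v)⁻¹))⁻¹ := by
  have h_comm := hp.commute_torus_conj hh
  have h_inv := hp.inv_torus_conj hh
  have h_left := hp.conj_sq_mul_torus_mul_inv
  have h_right := hp.conj_sq_mul_inv_torus_mul_cube
  set h := torus a v
  set y := h * v * h⁻¹
  have h_split : (v ^ 2)⁻¹ * y = v ^ 2 * h * v⁻¹ * (v ^ 2 * h⁻¹ * v ^ 3) := by
    have h_pow : (v ^ 2)⁻¹ = v ^ 2 * v ^ 3 :=
      inv_eq_of_mul_eq_one_right (by rw [← pow_add, ← pow_add, hp.pow_seven_eq_one])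
    calc (v ^ 2)⁻¹ * y = v ^ 2 * (y * v ^ 3) := by
          rw [h_pow, mul_assoc, (h_comm.pow_left 3).eq]
      _ = v ^ 2 * h * v⁻¹ * (v ^ 2 * h⁻¹ * v ^ 3) := by simp [y, sq, mul_assoc]
  refine eq_mul_of_mul_inv_eq ?_
  calc a * ((v ^ 2)⁻¹ * y) * a⁻¹ =
        a * (v ^ 2 * h * v⁻¹) * a * (a * (v ^ 2 * h⁻¹ * v ^ 3) * a) := by
          rw [h_split, hp.inv_eq_self]
          simp only [mul_assoc, hp.mul_mul_self]
    _ = v * (h⁻¹ * v * h) * v ^ 2 := by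
          rw [h_left, h_right]
          simp [pow_succ, mul_assoc]
    _ = ((v ^ 2)⁻¹ * y)⁻¹ := by
          rw [h_inv, h_comm.eq]
          simp

theorem torus_conj_eq_sq : torus a v * v * (torus a v)⁻¹ = v ^ 2 := by
  have h_comm := hp.commute_torus_conj hh
  have h_semi := hp.semiconjBy_inv_sq_mul_torus_conj hh
  set y := torus a v * v * (torus a v)⁻¹
  have h_sq : ((v ^ 2)⁻¹ * y) ^ 2 = 1 := by
    have h_comm' : Commute v ((v ^ 2)⁻¹ * y) := (Commute.self_pow v 2).inv_right.mul_right h_comm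
    exact sq_eq_one_of_semiconjBy_inv (by decide) hp.mul_pow_three_eq_one
      (SemiconjBy.mul_left h_comm'.inv_right h_semi)
  have h_seven : ((v ^ 2)⁻¹ * y) ^ 7 = 1 := by
    rw [(h_comm.pow_left 2).inv_left.mul_pow, conj_pow, inv_pow, pow_right_comm,
      hp.pow_seven_eq_one]
    simp
  have h_one : (v ^ 2)⁻¹ * y = 1 := by simpa using pow_gcd_eq_one.mpr ⟨h_sq, h_seven⟩
  exact (inv_mul_eq_one.mp h_one).symm

theorem torus_mem_normalizer : torus a v ∈ Subgroup.normalizer (Subgroup.zpowers v : Set G) := by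
  have : Finite (Subgroup.zpowers v : Set G) := hp.isOfFinOrder.finite_zpowers
  refine Subgroup.mem_normalizer_fintype ?_
  rintro _ ⟨k, rfl⟩
  refine ⟨2 * k, ?_⟩
  simp only [zpow_mul, ← conj_zpow, hp.torus_conj_eq_sq hh]
  norm_cast

theorem coe_borelSubgroup :
    (borelSubgroup a v : Set G) =
      (Subgroup.zpowers (torus a v) : Set G) * (Subgroup.zpowers v : Set G) :=
  Subgroup.coe_mul_of_left_le_normalizer_right _ _
    (Subgroup.zpowers_le.mpr (hp.torus_mem_normalizer hh))

end TorusPowThree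

theorem conj_sq : a * v ^ 2 * a = v ^ 3 * torus a v * a * v ^ 3 := by
  simp [torus, pow_succ, mul_assoc, hp.mul_mul_self]

theorem conj_cube : a * v ^ 3 * a = (torus a v)⁻¹ * (v ^ 3)⁻¹ * a * v ^ 2 := by
  simp [torus, pow_succ, mul_assoc, hp.mul_mul_self, hp.inv_eq_self]

theorem borelSubgroup_inv : borelSubgroup a v⁻¹ = borelSubgroup a v := by
  rw [borelSubgroup, hp.torus_inv, Subgroup.zpowers_inv, borelSubgroup]

theorem bigCell_inv : bigCell a v⁻¹ = bigCell a v := by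
  rw [bigCell, hp.borelSubgroup_inv, Subgroup.zpowers_inv, bigCell]

theorem conj_pow_mem_bigCell {k : ℕ} (hk : 1 ≤ k) (hk' : k ≤ 3) :
    a * v ^ k * a ∈ bigCell a v := by
  have hv (n : ℕ) : v ^ n ∈ Subgroup.zpowers v := Subgroup.npow_mem_zpowers v n
  have hU (n : ℕ) : v ^ n ∈ borelSubgroup a v := zpowers_le_borelSubgroup (hv n)
  have hT := torus_mem_borelSubgroup (a := a) (v := v)
  interval_cases k
  · have h := hp.inv.mul_mul_eq_conj_inv
    rw [inv_inv] at h
    exact mem_bigCell.mpr ⟨v⁻¹, by simpa using hU 1, v⁻¹, by simp, by simpa using h⟩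
  · exact mem_bigCell.mpr ⟨_, mul_mem (hU 3) hT, _, hv 3, hp.conj_sq.symm⟩
  · exact mem_bigCell.mpr
      ⟨_, mul_mem (inv_mem hT) (inv_mem (hU 3)), _, hv 2, hp.conj_cube.symm⟩

theorem conj_mem_borelSubgroup_union_bigCell {u : G} (hu : u ∈ Subgroup.zpowers v) :
    a * u * a ∈ (borelSubgroup a v : Set G) ∪ bigCell a v := by
  obtain ⟨n, hn, rfl⟩ : ∃ n < 7, v ^ n = u := by
    obtain ⟨n, rfl⟩ := hp.isOfFinOrder.mem_powers_iff_mem_zpowers.mpr hu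
    exact ⟨n % 7, Nat.mod_lt _ (by decide), (pow_eq_pow_mod n hp.pow_seven_eq_one).symm⟩
  rcases Nat.eq_zero_or_pos n with rfl | h_pos
  · exact .inl (by simp [hp.mul_self])
  right
  rcases le_or_gt n 3 with h_le | h_gt
  · exact hp.conj_pow_mem_bigCell h_pos h_le
  · have h_inv : v ^ n = v⁻¹ ^ (7 - n) := by
      rw [inv_pow, eq_inv_iff_mul_eq_one, ← pow_add, Nat.add_sub_cancel' hn.le,
        hp.pow_seven_eq_one]
    rw [h_inv, ← hp.bigCell_inv]
    exact hp.inv.conj_pow_mem_bigCell (by lia) (by lia)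

theorem borelSubgroup_union_bigCell (hgen : Subgroup.closure {a, v} = ⊤) :
    (borelSubgroup a v : Set G) ∪ bigCell a v = Set.univ := by
  have h_mul_zpowers {g u : G} (hu : u ∈ Subgroup.zpowers v)
      (hg : g ∈ (borelSubgroup a v : Set G) ∪ bigCell a v) :
      g * u ∈ (borelSubgroup a v : Set G) ∪ bigCell a v := by
    rcases hg with hg | hg
    · exact .inl (mul_mem hg (zpowers_le_borelSubgroup hu))
    · obtain ⟨b, hb, u', hu', rfl⟩ := mem_bigCell.mp hg
      exact .inr (mem_bigCell.mpr ⟨b, hb, u' * u, mul_mem hu' hu, by simp only [mul_assoc]⟩)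
  have h_mul_a {g : G} (hg : g ∈ (borelSubgroup a v : Set G) ∪ bigCell a v) :
      g * a ∈ (borelSubgroup a v : Set G) ∪ bigCell a v := by
    rcases hg with hg | hg
    · exact .inr (mem_bigCell.mpr ⟨g, hg, 1, one_mem _, mul_one _⟩)
    · obtain ⟨b, hb, u, hu, rfl⟩ := mem_bigCell.mp hg
      rw [mul_assoc b, mul_assoc b]
      exact (hp.conj_mem_borelSubgroup_union_bigCell hu).imp (mul_mem hb) (mul_mem_bigCell hb)
  refine Set.eq_univ_of_forall fun g => ?_
  have hg : g ∈ Subgroup.closure {a, v} := hgen ▸ Subgroup.mem_top g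
  induction hg using Subgroup.closure_induction_right with
  | one => exact .inl (one_mem _)
  | mul_right x _ y hy hx =>
    rcases hy with rfl | rfl
    · exact h_mul_a hx
    · exact h_mul_zpowers (Subgroup.mem_zpowers _) hx
  | mul_inv_cancel x _ y hy hx =>
    rcases hy with rfl | rfl
    · exact hp.inv_eq_self.symm ▸ h_mul_a hx
    · exact h_mul_zpowers (inv_mem (Subgroup.mem_zpowers _)) hx

section Card

variable (hh : torus a v ^ 3 = 1)
include hh

theorem finite_borelSubgroup : (borelSubgroup a v : Set G).Finite := by
  have hT : IsOfFinOrder (torus a v) := isOfFinOrder_iff_pow_eq_one.mpr ⟨3, by decide, hh⟩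
  rw [hp.coe_borelSubgroup hh]
  exact Set.Finite.mul hT.finite_zpowers hp.isOfFinOrder.finite_zpowers

theorem finite_bigCell : (bigCell a v).Finite :=
  ((hp.finite_borelSubgroup hh).mul (Set.finite_singleton a)).mul hp.isOfFinOrder.finite_zpowers

theorem natCard_borelSubgroup_le : Nat.card (borelSubgroup a v) ≤ 3 * 7 := by
  have h_mul := Set.natCard_mul_le
    (s := (Subgroup.zpowers (torus a v) : Set G)) (t := (Subgroup.zpowers v : Set G))
  rw [← hp.coe_borelSubgroup hh] at h_mul
  exact h_mul.trans (Nat.mul_le_mul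
    ((Nat.card_zpowers _).trans_le (orderOf_le_of_pow_eq_one (by decide) hh)) hp.natCard_zpowers_le)

theorem natCard_bigCell_le : Nat.card (bigCell a v) ≤ 3 * 7 * 1 * 7 :=
  Set.natCard_mul_le.trans (Nat.mul_le_mul (Set.natCard_mul_le.trans
    (Nat.mul_le_mul (hp.natCard_borelSubgroup_le hh) (by simp))) hp.natCard_zpowers_le)

variable (hgen : Subgroup.closure {a, v} = ⊤)
include hgen

protected theorem finite : Finite G := by
  rw [← Set.finite_univ_iff, ← hp.borelSubgroup_union_bigCell hgen]
  exact (hp.finite_borelSubgroup hh).union (hp.finite_bigCell hh)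

theorem natCard_le : Nat.card G ≤ 168 := by
  calc Nat.card G = ((borelSubgroup a v : Set G) ∪ bigCell a v).ncard := by
        rw [hp.borelSubgroup_union_bigCell hgen, Set.ncard_univ]
    _ ≤ 3 * 7 + 3 * 7 * 1 * 7 := (Set.ncard_union_le _ _).trans
        (Nat.add_le_add (hp.natCard_borelSubgroup_le hh) (hp.natCard_bigCell_le hh))

end Card

end IsHurwitzPair

section Presentation

variable {G : Type*} [Group G]

theorem IsHurwitzPair.conj_torus {a v : G} (hp : IsHurwitzPair a v) :
    (v ^ 3)⁻¹ * torus a v * v ^ 3 =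
      (v * a)⁻¹ ^ 2 * v * (v * a)⁻¹ ^ 2 * v ^ 4 * (v * a)⁻¹ * v ^ 4 := by
  have h_sq : (v * a)⁻¹ ^ 2 = v * a := by
    rw [inv_pow, inv_eq_iff_mul_eq_one, ← pow_succ, hp.mul_pow_three_eq_one]
  have h_four : v ^ 4 = (v ^ 3)⁻¹ :=
    eq_inv_of_mul_eq_one_left (by rw [← pow_add, hp.pow_seven_eq_one])
  have h_one : v = (v ^ 3)⁻¹ * (v ^ 3)⁻¹ := by
    rw [← mul_inv_rev, ← pow_add, eq_inv_iff_mul_eq_one, ← pow_succ', hp.pow_seven_eq_one]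
  calc (v ^ 3)⁻¹ * torus a v * v ^ 3
      = (v ^ 3)⁻¹ * (v ^ 3)⁻¹ * a * v ^ 2 * a * (v ^ 3)⁻¹ * a * v ^ 3 := by
        simp only [torus, mul_assoc]
    _ = v * a * v ^ 2 * a * v ^ 4 * a * v ^ 3 := by rw [← h_one, ← h_four]
    _ = (v * a)⁻¹ ^ 2 * v * (v * a)⁻¹ ^ 2 * v ^ 4 * (v * a)⁻¹ * v ^ 4 := by
        rw [h_sq]
        simp [pow_succ, mul_assoc, hp.inv_eq_self]

theorem IsHurwitzPair.torus_pow_eq_one_iff {a v : G} (hp : IsHurwitzPair a v) {k : ℕ} :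
    torus a v ^ k = 1 ↔
      ((v * a)⁻¹ ^ 2 * v * (v * a)⁻¹ ^ 2 * v ^ 4 * (v * a)⁻¹ * v ^ 4) ^ k = 1 := by
  have h_conj := conj_pow (a := (v ^ 3)⁻¹) (b := torus a v) (i := k)
  rw [inv_inv, hp.conj_torus] at h_conj
  rw [h_conj]
  simpa using (conj_eq_one_iff (a := (v ^ 3)⁻¹) (b := torus a v ^ k)).symm

theorem forall_mem_hurwitzRels_lift_eq_one_iff {k : ℕ} {f : Fin 3 → G} :
    (∀ r ∈ hurwitzRels k, FreeGroup.lift f r = 1) ↔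
      IsHurwitzPair (f 0) (f 2) ∧ f 1 = (f 2 * f 0)⁻¹ ∧ torus (f 0) (f 2) ^ k = 1 := by
  simp only [hurwitzRels, Set.mem_insert_iff, Set.mem_singleton_iff, forall_eq_or_imp, forall_eq,
    map_mul, map_pow, FreeGroup.lift_apply_of]
  generalize f 0 = a, f 1 = b, f 2 = v
  have h_inv : a * b * v = 1 ↔ b = (v * a)⁻¹ := by
    rw [mul_eq_one_comm, ← mul_assoc, mul_eq_one_iff_inv_eq, eq_comm]
  rw [h_inv]
  constructor
  · rintro ⟨ha, hb, hv, rfl, hS⟩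
    have hp : IsHurwitzPair a v := ⟨ha, hv, by rwa [inv_pow, inv_eq_one] at hb⟩
    exact ⟨hp, rfl, hp.torus_pow_eq_one_iff.mpr hS⟩
  · rintro ⟨hp, rfl, hT⟩
    exact ⟨hp.sq_eq_one, by rw [inv_pow, hp.mul_pow_three_eq_one, inv_one], hp.pow_seven_eq_one,
      rfl, hp.torus_pow_eq_one_iff.mp hT⟩

section OfRels

open PresentedGroup

variable (k : ℕ)

theorem of_hurwitzRels :
    IsHurwitzPair (of 0 : PresentedGroup (hurwitzRels k)) (of 2) ∧
      (of 1 : PresentedGroup (hurwitzRels k)) = (of 2 * of 0)⁻¹ ∧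
      torus (of 0 : PresentedGroup (hurwitzRels k)) (of 2) ^ k = 1 := by
  refine forall_mem_hurwitzRels_lift_eq_one_iff (f := of).mp fun r hr => ?_
  have h_lift : FreeGroup.lift (of (rels := hurwitzRels k)) = mk (hurwitzRels k) := by
    ext
    simp [of]
  rw [h_lift]
  exact one_of_mem hr

theorem closure_of_hurwitzRels :
    Subgroup.closure {(of 0 : PresentedGroup (hurwitzRels k)), of 2} = ⊤ := by
  obtain ⟨-, h_one, -⟩ := of_hurwitzRels k
  have h_gen := Subgroup.subset_closure (k := {(of 0 : PresentedGroup (hurwitzRels k)), of 2})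
  have h0 := h_gen (Set.mem_insert _ _)
  have h2 := h_gen (Set.mem_insert_of_mem _ rfl)
  rw [eq_top_iff, ← closure_range_of, Subgroup.closure_le]
  rintro _ ⟨i, rfl⟩
  match i with
  | 0 => exact h0
  | 1 => exact h_one ▸ inv_mem (mul_mem h2 h0)
  | 2 => exact h2

end OfRels

end Presentation

section ProjectiveLine

open Equiv

/-- The Weyl element `x ↦ -1 / x` of `PSL(2,7)` acting on the projective line over `ZMod 7`, with
`none` as the point at infinity; `1 / x` is written as `x ^ 5` to make it computable. -/
def negInvPerm : Perm (Option (ZMod 7)) :=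
  swap none (some 0) *
    optionCongr (Function.Involutive.toPerm (fun x => -x ^ 5)
      (by unfold Function.Involutive; decide))

/-- The unipotent element `x ↦ x + 1` of `PSL(2,7)` acting on the projective line over `ZMod 7`,
with `none` as the point at infinity. -/
def addOnePerm : Perm (Option (ZMod 7)) :=
  optionCongr (Equiv.addRight 1)

theorem isHurwitzPair_negInvPerm_addOnePerm : IsHurwitzPair negInvPerm addOnePerm where
  sq_eq_one := by decide
  pow_seven_eq_one := by decide
  mul_pow_three_eq_one := by decide

set_option maxRecDepth 2000 in
theorem torus_negInvPerm_addOnePerm_pow_three : torus negInvPerm addOnePerm ^ 3 = 1 := by decide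

theorem addOnePerm_pow_val_mul_negInvPerm_none (x : ZMod 7) :
    (addOnePerm ^ x.val * negInvPerm) none = some x := by
  revert x
  decide

theorem dvd_natCard_of_map_negInvPerm_addOnePerm {G : Type*} [Group G]
    (φ : G →* Perm (Option (ZMod 7))) {a v : G}
    (ha : φ a = negInvPerm) (hv : φ v = addOnePerm) : 168 ∣ Nat.card G := by
  have h_torus : orderOf (φ (torus a v)) = 3 := by
    have h_map : φ (torus a v) = torus negInvPerm addOnePerm := by
      simp only [torus, map_mul, map_inv, map_pow, ha, hv]
    rw [h_map]
    exact orderOf_eq_prime torus_negInvPerm_addOnePerm_pow_three (by decide)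
  have h_unipotent : orderOf (φ v) = 7 := by
    rw [hv]
    have : Fact (Nat.Prime 7) := ⟨by norm_num⟩
    exact orderOf_eq_prime isHurwitzPair_negInvPerm_addOnePerm.pow_seven_eq_one (by decide)
  have h_eight : 8 ∣ Nat.card G := by
    let _ : MulAction G (Option (ZMod 7)) := MulAction.compHom _ φ
    have : MulAction.IsPretransitive G (Option (ZMod 7)) := by
      refine MulAction.isPretransitive_iff_base none |>.mpr fun
        | none => ⟨1, one_smul _ _⟩
        | some x => ⟨v ^ x.val * a, ?_⟩
      change φ (v ^ x.val * a) none = some x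
      rw [map_mul, map_pow, ha, hv, addOnePerm_pow_val_mul_negInvPerm_none]
    have := Subgroup.index_dvd_card (MulAction.stabilizer G (none : Option (ZMod 7)))
    rw [MulAction.index_stabilizer_of_transitive] at this
    simpa using this
  have h_three : 3 ∣ Nat.card G := h_torus ▸ (orderOf_map_dvd φ _).trans (orderOf_dvd_natCard _)
  have h_seven : 7 ∣ Nat.card G := h_unipotent ▸ (orderOf_map_dvd φ _).trans (orderOf_dvd_natCard _)
  lia

end ProjectiveLine

theorem stmt_15 : Nat.card (PresentedGroup (hurwitzRels 3)) = 168 := by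
  obtain ⟨hp, -, hh⟩ := of_hurwitzRels 3
  have hgen := closure_of_hurwitzRels 3
  have := hp.finite hh hgen
  have h_rels := forall_mem_hurwitzRels_lift_eq_one_iff
    (f := ![negInvPerm, (addOnePerm * negInvPerm)⁻¹, addOnePerm]) |>.mpr
      ⟨isHurwitzPair_negInvPerm_addOnePerm, rfl, torus_negInvPerm_addOnePerm_pow_three⟩
  have h_dvd : 168 ∣ Nat.card (PresentedGroup (hurwitzRels 3)) :=
    dvd_natCard_of_map_negInvPerm_addOnePerm (PresentedGroup.toGroup h_rels)
      (PresentedGroup.toGroup.of h_rels (x := 0))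
      (PresentedGroup.toGroup.of h_rels (x := 2))
  exact (hp.natCard_le hh hgen).antisymm (Nat.le_of_dvd Nat.card_pos h_dvd)
end

section
/- Let H be the group with presentation ⟨A, B, C | A² = B³ = C⁷ = ABC = (B²CB²C⁴BC⁴)⁴ = 1⟩. Then H has order 16515072. -/
/-!
Put `a = A` and `c = C`, so that `B = ac⁻¹`. The element `y₀ = ac⁵ac²a` and its conjugates
`yᵢ = cⁱy₀c⁻ⁱ` are involutions, and conjugates of the mirror automorphism or of its square are
words in them. The products `yᵢyᵢ₊₁yᵢ₊₃` along the lines `{i, i + 1, i + 3}` of the Fano plane and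
their conjugates generate a normal subgroup of `⟨y₀, …, y₆⟩`, modulo which the `yᵢ` add up like the
nonzero elements of `𝔽₈`. Commutator calculations show that this normal subgroup is a central
extension of an elementary abelian group of rank at most `14` by a group of order at most `2`. So
`⟨y₀, …, y₆⟩` has order at most `2¹⁸`, the subgroup `⟨c, y₀⟩` at most `7 · 2¹⁸`, and the whole
group, being covered by nine cosets of the latter, at most `9 · 7 · 2¹⁸ = 16515072`.

Conversely, monomial permutations of eight blocks with labels in an explicit group of order `2¹⁵`
realise `⟨c, y₀⟩` with its full order, and any such realisation can be induced to
a realisation of the whole group by monomial permutations of nine blocks.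
-/

section GeneralGroup

variable {G : Type*} [Group G]

theorem commute_of_involutions {a b : G} (ha : a * a = 1) (hb : b * b = 1)
    (h : a * b * (a * b) = 1) : Commute a b := by
  rw [Commute, SemiconjBy, eq_inv_of_mul_eq_one_left h, mul_inv_rev,
    inv_eq_of_mul_eq_one_right ha, inv_eq_of_mul_eq_one_right hb]

theorem mul_mul_self_of_commute {a b : G} (h : Commute a b) (ha : a * a = 1) (hb : b * b = 1) :
    a * b * (a * b) = 1 := by
  rw [h.symm.mul_mul_mul_comm, ha, hb, one_mul]

theorem sq_mul_eq_of_commute {x y w : G} (hy : y * y = 1) (hw : w * w = 1)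
    (h : Commute x (y * w)) : (y * x) ^ 2 = (w * x) ^ 2 :=
  calc (y * x) ^ 2 = y * (x * (y * w)) * (w * x) := by
        rw [← mul_assoc x, mul_assoc, mul_assoc (x * y), ← mul_assoc w, hw, one_mul, sq]
        simp only [mul_assoc]
    _ = y * y * (w * x * (w * x)) := by rw [h.eq]; simp only [mul_assoc]
    _ = (w * x) ^ 2 := by rw [hy, one_mul, sq]

theorem inv_sq_mul_of_involutions {x y : G} (hx : x * x = 1) (hy : y * y = 1) :
    ((x * y) ^ 2)⁻¹ = (y * x) ^ 2 := by
  rw [← inv_pow, mul_inv_rev, inv_eq_of_mul_eq_one_right hx, inv_eq_of_mul_eq_one_right hy]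

theorem pow_val_add_of_pow_eq_one {n : ℕ} [NeZero n] {c : G} (hc : c ^ n = 1) (i j : Fin n) :
    c ^ ((i + j : Fin n) : ℕ) = c ^ (i : ℕ) * c ^ (j : ℕ) := by
  rw [Fin.val_add, ← pow_eq_pow_mod _ hc, pow_add]

theorem inv_eq_pow_six_of_pow_seven {c : G} (hc : c ^ 7 = 1) : c⁻¹ = c ^ 6 :=
  inv_eq_of_mul_eq_one_left ((pow_succ c 6).symm.trans hc)

theorem mul_cancel_left_of_pow_seven {c : G} (hc : c ^ 7 = 1) (g : G) :
    c * (c * (c * (c * (c * (c * (c * g)))))) = g := by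
  simpa [pow_succ, mul_assoc] using congrArg (· * g) hc

theorem card_closure_le {ι : Type*} [Finite ι] {S : Set G} (L : Subgroup G) [Finite L]
    (r : ι → G) (h₁ : ∃ i, r i ∈ L) (hr : ∀ s ∈ S, ∀ i, ∃ j, ∃ l ∈ L, r i * s = l * r j) :
    Finite (Subgroup.closure S) ∧ Nat.card (Subgroup.closure S) ≤ Nat.card ι * Nat.card L := by
  set T : Set G := Set.range fun x : ι × L ↦ x.2 * r x.1 with hT
  have hTfin : T.Finite := Set.finite_range _
  have hmaps (s) (hs : s ∈ S) : Set.MapsTo (· * s) T T := by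
    rintro _ ⟨⟨i, l⟩, rfl⟩
    obtain ⟨j, l', hl', h⟩ := hr s hs i
    exact ⟨⟨j, l * ⟨l', hl'⟩⟩, by simp [mul_assoc, h]⟩
  have hsurj (s) (hs : s ∈ S) : Set.SurjOn (· * s) T T :=
    ((hTfin.injOn_iff_bijOn_of_mapsTo (hmaps s hs)).1 (mul_left_injective s).injOn).surjOn
  have hsub : (Subgroup.closure S : Set G) ⊆ T := fun g hg ↦ by
    induction hg using Subgroup.closure_induction_right with
    | one =>
      obtain ⟨i, hi⟩ := h₁
      exact ⟨⟨i, ⟨r i, hi⟩⁻¹⟩, by simp⟩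
    | mul_right g _ s hs hg => exact hmaps s hs hg
    | mul_inv_cancel g _ s hs hg =>
      obtain ⟨t, ht, rfl⟩ := hsurj s hs hg
      simpa using ht
  refine ⟨hTfin.subset hsub, ?_⟩
  calc Nat.card (Subgroup.closure S) = (Subgroup.closure S : Set G).ncard := rfl
    _ ≤ T.ncard := Set.ncard_le_ncard hsub hTfin
    _ ≤ Nat.card (ι × L) := by
        rw [hT, ← Nat.card_coe_set_eq]
        exact Finite.card_range_le _
    _ = Nat.card ι * Nat.card L := Nat.card_prod _ _

theorem card_closure_le_two_pow {S : Set G} (hfin : S.Finite)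
    (hS : ∀ s ∈ S, s * s = 1) (hcomm : ∀ s ∈ S, ∀ t ∈ S, Commute s t) :
    Finite (Subgroup.closure S) ∧ Nat.card (Subgroup.closure S) ≤ 2 ^ S.ncard := by
  induction S, hfin using Set.Finite.induction_on with
  | empty =>
    rw [Subgroup.closure_empty]
    exact ⟨inferInstance, by simp⟩
  | @insert s S hs hSfin ih =>
    simp only [Set.forall_mem_insert] at hS hcomm
    obtain ⟨hfin, hcard⟩ := ih hS.2 fun t ht ↦ (hcomm.2 t ht).2
    have h := card_closure_le (S := insert s S) (Subgroup.closure S) ![1, s]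
        ⟨0, Subgroup.one_mem _⟩ <| by
      simp only [Set.forall_mem_insert, Fin.forall_fin_two, Fin.exists_fin_two]
      refine ⟨⟨.inr ⟨1, one_mem _, rfl⟩, .inl ⟨1, one_mem _, by simp [hS.1]⟩⟩, fun t ht ↦ ?_⟩
      have ht' := Subgroup.subset_closure ht
      exact ⟨.inl ⟨t, ht', by simp⟩, .inr ⟨t, ht', by simpa using (hcomm.1.2 t ht).eq⟩⟩
    refine ⟨h.1, h.2.trans ?_⟩
    rw [Set.ncard_insert_of_notMem hs hSfin, pow_succ', Nat.card_fin]
    exact Nat.mul_le_mul_left _ hcard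

theorem card_mul_ncard_le {X : Type*} [MulAction G X] {T L : Subgroup G} [Finite T]
    {s : Set X} {x₀ : X} (hL : L ≤ T) (hfix : L ≤ MulAction.stabilizer G x₀)
    (hs : ∀ x ∈ s, ∃ t ∈ T, t • x₀ = x) : Nat.card L * s.ncard ≤ Nat.card T := by
  have hsub : s ⊆ MulAction.orbit T x₀ := fun x hx ↦ by
    obtain ⟨t, ht, rfl⟩ := hs x hx
    exact ⟨⟨t, ht⟩, rfl⟩
  rw [← Subgroup.card_mul_index (MulAction.stabilizer T x₀), MulAction.index_stabilizer]
  refine Nat.mul_le_mul ?_ (Set.ncard_le_ncard hsub (Set.finite_range _))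
  have hLT : L.subgroupOf T ≤ MulAction.stabilizer T x₀ := fun t ht ↦ hfix ht
  rw [← Nat.card_congr (Subgroup.subgroupOfEquivOfLe hL).toEquiv]
  exact Subgroup.card_le_of_le hLT

end GeneralGroup

/-- Seven involutions `yᵢ`, thought of as the points of the Fano plane with lines
`{i, i + 1, i + 3}`, subject to the relations which their counterparts in the Hurwitz quotient
inherit from its mirror relation. The indices are taken modulo `7`. -/
structure FanoSystem (G : Type*) [Group G] where
  y : Fin 7 → G
  y_mul_self (i) : y i * y i = 1
  line_sq (i) : y i * y (i + 1) * y (i + 3) * (y i * y (i + 1) * y (i + 3)) = 1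
  mul_pow_four (i) : (y i * y (i + 1)) ^ 4 = 1
  quad_sq (i) :
    y (i + 4) * y (i + 3) * y (i + 2) * y i * (y (i + 4) * y (i + 3) * y (i + 2) * y i) = 1
  heptagon (i) : y (i + 6) * y (i + 5) * y (i + 4) * y (i + 3) * y (i + 2) * y (i + 1) * y i = 1

namespace FanoSystem

attribute [simp] y_mul_self

variable {G : Type*} [Group G] (F : FanoSystem G) (i : Fin 7)

@[simp] theorem y_inv : (F.y i)⁻¹ = F.y i := inv_eq_of_mul_eq_one_right (F.y_mul_self i)

@[simp] theorem y_mul_cancel (g : G) : F.y i * (F.y i * g) = g := by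
  rw [← mul_assoc, F.y_mul_self, one_mul]

/-- The product of the points of the line `{i, i + 1, i + 3}`, starting from `i`. It is trivial in
the quotient `𝔽₈` of the group generated by the points.

A subscript in a lemma name such as `commute_α_γ₂` is the offset of the index: it relates `α i` and
`γ (i + 2)`. -/
def α : G := F.y i * F.y (i + 1) * F.y (i + 3)

/-- The product of the points of the line `{i, i + 1, i + 3}`, starting from `i + 1`. -/
def β : G := F.y (i + 1) * F.y (i + 3) * F.y i

/-- The product of the points of the line `{i, i + 1, i + 3}`, starting from `i + 3`. -/
def γ : G := F.y (i + 3) * F.y i * F.y (i + 1)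

@[simp] theorem α_mul_self : F.α i * F.α i = 1 := F.line_sq i

@[simp] theorem β_mul_self : F.β i * F.β i = 1 := by
  simpa [mul_assoc, α, β] using congrArg (MulAut.conj (F.y i)) (F.α_mul_self i)

@[simp] theorem γ_mul_self : F.γ i * F.γ i = 1 := by
  simpa [mul_assoc, α, γ] using congrArg (MulAut.conj (F.y (i + 3))) (F.α_mul_self i)

theorem α_rev : F.α i = F.y (i + 3) * F.y (i + 1) * F.y i := by
  simpa [α, mul_assoc] using eq_inv_of_mul_eq_one_left (F.α_mul_self i)

theorem β_rev : F.β i = F.y i * F.y (i + 3) * F.y (i + 1) := by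
  simpa [β, mul_assoc] using eq_inv_of_mul_eq_one_left (F.β_mul_self i)

theorem γ_rev : F.γ i = F.y (i + 1) * F.y i * F.y (i + 3) := by
  simpa [γ, mul_assoc] using eq_inv_of_mul_eq_one_left (F.γ_mul_self i)

@[simp] theorem α_mul_cancel (g : G) : F.α i * (F.α i * g) = g := by
  rw [← mul_assoc, α_mul_self, one_mul]

@[simp] theorem β_mul_cancel (g : G) : F.β i * (F.β i * g) = g := by
  rw [← mul_assoc, β_mul_self, one_mul]

@[simp] theorem γ_mul_cancel (g : G) : F.γ i * (F.γ i * g) = g := by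
  rw [← mul_assoc, γ_mul_self, one_mul]

@[simp] theorem α_inv : (F.α i)⁻¹ = F.α i := inv_eq_of_mul_eq_one_right (F.α_mul_self i)

@[simp] theorem β_inv : (F.β i)⁻¹ = F.β i := inv_eq_of_mul_eq_one_right (F.β_mul_self i)

theorem conj_α₀ : MulAut.conj (F.y i) (F.α i) = F.β i := by
  simp [α, β, mul_assoc]

theorem conj_β₀ : MulAut.conj (F.y i) (F.β i) = F.α i := by
  simp [α, β, mul_assoc]

theorem conj_γ₀ : MulAut.conj (F.y i) (F.γ i) = F.α i * F.γ i * F.β i := by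
  conv_lhs => rw [F.γ_rev i]
  simp [α, β, γ, mul_assoc]

theorem conj_α₆ : MulAut.conj (F.y i) (F.α (i + 6)) = F.β (i + 6) * F.α (i + 6) * F.γ (i + 6) := by
  conv_lhs => rw [F.α_rev (i + 6)]
  simp [α, β, γ, mul_assoc, add_assoc]

theorem conj_β₆ : MulAut.conj (F.y i) (F.β (i + 6)) = F.γ (i + 6) := by
  simp [β, γ, mul_assoc, add_assoc]

theorem conj_γ₆ : MulAut.conj (F.y i) (F.γ (i + 6)) = F.β (i + 6) := by
  simp [β, γ, mul_assoc, add_assoc]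

theorem conj_α₅ : MulAut.conj (F.y i) (F.α (i + 5)) = F.α i * F.β (i + 3) * F.α (i + 4) := by
  rw [F.α_rev (i + 5), F.β_rev (i + 3)]
  simp [α, mul_assoc, add_assoc]

theorem conj_γ₅ : MulAut.conj (F.y i) (F.γ (i + 5)) = F.γ (i + 6) * F.β (i + 2) * F.α i := by
  rw [F.γ_rev (i + 5), F.γ_rev (i + 6), F.β_rev (i + 2), F.α_rev i]
  simp [mul_assoc, add_assoc]

theorem conj_α₄ : MulAut.conj (F.y i) (F.α (i + 4)) = F.γ (i + 4) := by
  simp [α, γ, mul_assoc, add_assoc]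

theorem conj_γ₄ : MulAut.conj (F.y i) (F.γ (i + 4)) = F.α (i + 4) := by
  simp [α, γ, mul_assoc, add_assoc]

theorem conj_β₃ : MulAut.conj (F.y i) (F.β (i + 3)) = F.β i * F.α (i + 5) * F.γ (i + 4) := by
  rw [F.β_rev (i + 3), F.β_rev i, F.α_rev (i + 5), F.γ_rev (i + 4)]
  simp [mul_assoc, add_assoc]

theorem conj_α₂ : MulAut.conj (F.y i) (F.α (i + 2)) = F.α (i + 4) * F.γ (i + 3) * F.β (i + 6) := by
  rw [F.α_rev (i + 2), F.α_rev (i + 4), F.γ_rev (i + 3), F.β_rev (i + 6)]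
  simp [mul_assoc, add_assoc]

theorem conj_α₁ : MulAut.conj (F.y i) (F.α (i + 1)) = F.α i * F.γ (i + 2) * F.γ (i + 4) := by
  rw [F.γ_rev (i + 2), F.γ_rev (i + 4)]
  simp [α, mul_assoc, add_assoc]

theorem conj_β₁ : MulAut.conj (F.y i) (F.β (i + 1)) = F.β (i + 6) * F.α (i + 3) * F.α i := by
  rw [F.α_rev (i + 3), F.α_rev i]
  simp [β, mul_assoc, add_assoc]

theorem β_eq : F.β i = F.γ (i + 4) * F.α (i + 6) * F.γ (i + 1) * F.α (i + 1) := by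
  have h := congrArg (MulAut.conj (F.y i) ·⁻¹) (F.heptagon (i + 4))
  rw [F.γ_rev (i + 1), F.α_rev (i + 1), ← F.β_inv, inv_eq_iff_mul_eq_one]
  simpa [α, β, γ, mul_assoc, add_assoc] using congrArg (MulAut.conj (F.β i)) h

theorem commute_α_γ₀ : Commute (F.α i) (F.γ i) := by
  refine commute_of_involutions (F.α_mul_self i) (F.γ_mul_self i) ?_
  simpa [α, γ, pow_succ, mul_assoc] using F.mul_pow_four i

theorem commute_β_γ₄ : Commute (F.β i) (F.γ (i + 4)) := by
  refine (commute_of_involutions (F.γ_mul_self _) (F.β_mul_self _) ?_).symm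
  rw [F.γ_rev (i + 4), F.β_rev i]
  simpa [mul_assoc, add_assoc] using F.quad_sq (i + 1)

theorem commute_β_γ₅ : Commute (F.β i) (F.γ (i + 5)) := by
  refine (commute_of_involutions (F.γ_mul_self _) (F.β_mul_self _) ?_).symm
  rw [F.γ_rev (i + 5)]
  have h := congrArg (MulAut.conj (F.y (i + 0))) (F.quad_sq (i + 3))
  simpa [β, mul_assoc, add_assoc] using h

theorem commute_α_α₃ : Commute (F.α i) (F.α (i + 3)) := by
  have h (i) := (F.commute_β_γ₄ i).map (MulAut.conj (F.y i))
  simp only [conj_β₀, conj_γ₄] at h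
  simpa [add_assoc] using (h (i + 3)).symm

theorem commute_α_γ₂ : Commute (F.α i) (F.γ (i + 2)) := by
  have h (i) := (F.commute_β_γ₅ (i + 6)).map (MulAut.conj (F.y i))
  simp only [add_assoc, Fin.reduceAdd, conj_β₆, conj_γ₄] at h
  simpa [add_assoc] using (h (i + 3)).symm

theorem γ₄_mul_β : F.γ (i + 4) * F.β i = F.α (i + 6) * F.γ (i + 1) * F.α (i + 1) := by
  simp [β_eq, mul_assoc]

theorem commute_α_α₂ : Commute (F.α i) (F.α (i + 2)) := by
  have h₀ := F.commute_β_γ₄ (i + 1)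
  have h₁ := F.γ₄_mul_β (i + 1)
  simp only [add_assoc, Fin.reduceAdd, add_zero] at h₀ h₁
  have hαα : F.γ (i + 2) * (F.γ (i + 5) * F.β (i + 1)) = F.α i * F.α (i + 2) := by
    rw [h₁, (F.commute_α_γ₂ i).eq]
    simp [mul_assoc]
  have hγ : Commute (F.γ (i + 2)) (F.γ (i + 5) * F.β (i + 1)) := by
    rw [h₁]
    exact ((F.commute_α_γ₂ i).symm.mul_right (.refl _)).mul_right (F.commute_α_γ₀ (i + 2)).symm
  refine commute_of_involutions (F.α_mul_self i) (F.α_mul_self _) ?_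
  rw [← hαα]
  exact mul_mul_self_of_commute hγ (F.γ_mul_self _)
    (mul_mul_self_of_commute h₀.symm (F.γ_mul_self _) (F.β_mul_self _))

theorem β_mul_γ₁ : F.β i * F.γ (i + 1) = F.γ (i + 4) * F.α (i + 6) * F.α (i + 1) := by
  simp [β_eq, (F.commute_α_γ₀ (i + 1)).eq, mul_assoc]

theorem commute_α_β₃_mul_γ₄ : Commute (F.α i) (F.β (i + 3) * F.γ (i + 4)) := by
  have h := F.β_mul_γ₁ (i + 3)
  have h₁ := (F.commute_α_α₃ (i + 4)).symm
  simp only [add_assoc, Fin.reduceAdd, add_zero] at h h₁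
  rw [h]
  exact ((F.commute_α_γ₀ i).mul_right (F.commute_α_α₂ i)).mul_right h₁

theorem commute_γ_γ₁ : Commute (F.γ i) (F.γ (i + 1)) := by
  have h (i) : Commute (F.γ (i + 4)) (F.γ (i + 3)) := by
    have h₁ := (F.commute_α_α₂ (i + 2)).symm
    have h₂ := F.commute_α_γ₂ (i + 4)
    simp only [add_assoc, Fin.reduceAdd] at h₁ h₂
    have h := (h₁.mul_right h₂).map (MulAut.conj (F.y i))
    rw [map_mul, conj_α₂, conj_α₄, conj_γ₆, mul_assoc, β_mul_self, mul_one] at h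
    simpa using (F.commute_α_γ₀ (i + 4)).symm.mul_right h
  simpa [add_assoc] using (h (i + 4)).symm

theorem commute_γ₄_α_mul_γ₂ : Commute (F.γ (i + 4)) (F.α i * F.γ (i + 2)) := by
  have h := F.commute_α_α₃ (i + 1)
  simp only [add_assoc, Fin.reduceAdd] at h
  have h' := h.symm.map (MulAut.conj (F.y i))
  rw [conj_α₁, conj_α₄] at h'
  simpa [mul_assoc] using h'.mul_right (Commute.refl (F.γ (i + 4)))

theorem commute_β_α_mul_γ : Commute (F.β i) (F.α i * F.γ i) := by
  have h := (F.commute_α_γ₀ i).map (MulAut.conj (F.y i))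
  rw [conj_α₀, conj_γ₀] at h
  simpa [mul_assoc] using h.mul_right (Commute.refl (F.β i))

theorem commute_γ₅_α_mul_γ : Commute (F.γ (i + 5)) (F.α i * F.γ i) := by
  have h (i) : Commute (F.γ (i + 4)) (F.α (i + 6) * F.γ (i + 6)) := by
    have h₁ := (F.commute_α_α₂ (i + 4)).symm
    have h₃ := F.commute_β_γ₅ (i + 6)
    simp only [add_assoc, Fin.reduceAdd] at h₁ h₃
    have h := (h₁.mul_right (F.commute_α_γ₀ (i + 6))).map (MulAut.conj (F.y i))
    rw [map_mul, conj_α₆, conj_α₄, conj_γ₆] at h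
    have h₄ := F.commute_β_α_mul_γ (i + 6)
    rw [mul_assoc] at h
    have hβ := ((Commute.refl (F.β (i + 6))).mul_right h₄).symm
    have hγ := h.mul_right hβ
    rw [mul_assoc (F.γ _), β_mul_self, mul_one] at hγ
    simpa using h₃.symm.mul_right hγ.symm
  simpa [add_assoc] using h (i + 1)

theorem commute_β_γ₃ : Commute (F.β i) (F.γ (i + 3)) := by
  have h₁ := F.commute_γ_γ₁ (i + 3)
  have h₂ := F.commute_γ₄_α_mul_γ₂ (i + 6)
  have h₃ := (F.commute_α_γ₂ (i + 1)).symm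
  simp only [add_assoc, Fin.reduceAdd] at h₁ h₂ h₃
  have h := (h₁.mul_right h₂).mul_right h₃
  rw [β_eq]
  simpa [mul_assoc] using h.symm

theorem commute_α₁_β₃_mul_α : Commute (F.α (i + 1)) (F.β (i + 3) * F.α i) := by
  have h (i) : Commute (F.α (i + 4)) (F.β (i + 6) * F.α (i + 3)) := by
    have h₁ := F.commute_β_γ₃ (i + 1)
    simp only [add_assoc, Fin.reduceAdd] at h₁
    have h := (h₁.symm.mul_right (F.commute_β_γ₄ i).symm).map (MulAut.conj (F.y i))
    simpa [map_mul, conj_γ₄, conj_β₁, conj_β₀, mul_assoc, -MulAut.conj_apply] using h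
  simpa [add_assoc] using h (i + 4)

theorem commute_α_γ₆_mul_β₂ : Commute (F.α i) (F.γ (i + 6) * F.β (i + 2)) := by
  have h := (F.commute_β_γ₅ i).map (MulAut.conj (F.y i))
  rw [conj_β₀, conj_γ₅] at h
  simpa [mul_assoc] using h.mul_right (Commute.refl (F.α i))

theorem commute_α₁_α_mul_γ : Commute (F.α (i + 1)) (F.α i * F.γ i) := by
  have h := F.commute_α_γ₆_mul_β₂ (i + 1)
  simp only [add_assoc, Fin.reduceAdd, add_zero] at h
  rw [(F.commute_α_γ₀ i).eq]
  simpa [mul_assoc] using h.mul_right (F.commute_α₁_β₃_mul_α i)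

theorem commute_β_γ₁ : Commute (F.β i) (F.γ (i + 1)) := by
  have h (i) : Commute (F.β (i + 3)) (F.γ (i + 4)) := by
    have h₁ := F.commute_α₁_α_mul_γ (i + 4)
    simp only [add_assoc, Fin.reduceAdd] at h₁
    have h := congrArg (MulAut.conj (F.y i)) (mul_mul_self_of_commute h₁ (F.α_mul_self _)
      (mul_mul_self_of_commute (F.commute_α_γ₀ _) (F.α_mul_self _) (F.γ_mul_self _)))
    have hγ : F.α (i + 4) * (F.γ (i + 4) * F.α (i + 4)) = F.γ (i + 4) := by
      rw [← (F.commute_α_γ₀ _).eq, α_mul_cancel]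
    simp only [map_mul, map_one, conj_α₅, conj_α₄, conj_γ₄] at h
    refine commute_of_involutions (F.β_mul_self _) (F.γ_mul_self _) ?_
    have h' := (F.commute_α_β₃_mul_γ₄ i).symm.mul_mul_mul_comm (F.α i) (F.β (i + 3) * F.γ (i + 4))
    rw [α_mul_self, one_mul] at h'
    rw [← h', ← h]
    simp only [mul_assoc, hγ]
  simpa [add_assoc] using h (i + 4)

theorem commute_γ₅_α_mul_α₂ : Commute (F.γ (i + 5)) (F.α i * F.α (i + 2)) := by
  have h₁ := F.β_mul_γ₁ (i + 1)
  have h₂ := F.commute_β_γ₁ (i + 1)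
  simp only [add_assoc, Fin.reduceAdd, add_zero] at h₁ h₂
  have hαα : F.γ (i + 5) * (F.β (i + 1) * F.γ (i + 2)) = F.α i * F.α (i + 2) := by
    rw [h₁]
    simp [mul_assoc]
  have hβγ := commute_of_involutions (F.γ_mul_self (i + 5))
    (mul_mul_self_of_commute h₂ (F.β_mul_self _) (F.γ_mul_self _)) <| by
      rw [hαα]
      exact mul_mul_self_of_commute (F.commute_α_α₂ i) (F.α_mul_self _) (F.α_mul_self _)
  rw [← hαα]
  exact (Commute.refl _).mul_right hβγ

theorem commute_γ_γ₃ : Commute (F.γ i) (F.γ (i + 3)) := by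
  have h (i) : Commute (F.γ (i + 1)) (F.γ (i + 4)) := by
    have h₁ := (F.commute_β_γ₁ i).symm
    have h₂ := (F.commute_α_γ₂ (i + 6)).symm
    have h₃ := (F.commute_α_γ₀ (i + 1)).symm
    simp only [add_assoc, Fin.reduceAdd] at h₂
    have h := ((h₁.mul_right h₃).mul_right (Commute.refl (F.γ (i + 1)))).mul_right h₂
    simpa [β_eq, mul_assoc] using h
  simpa [add_assoc] using h (i + 6)

theorem commute_α_β₃_mul_α₁ : Commute (F.α i) (F.β (i + 3) * F.α (i + 1)) := by
  have h (i) : Commute (F.α (i + 4)) (F.β i * F.α (i + 5)) := by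
    have h₁ := (F.commute_β_γ₁ (i + 3)).symm
    simp only [add_assoc, Fin.reduceAdd] at h₁
    have h := (h₁.mul_right (F.commute_α_γ₀ (i + 4)).symm).map (MulAut.conj (F.y i))
    simpa [map_mul, conj_γ₄, conj_β₃, conj_α₄, mul_assoc, -MulAut.conj_apply] using h
  simpa [add_assoc] using h (i + 3)

theorem commute_α_α₁_mul_γ₄ : Commute (F.α i) (F.α (i + 1) * F.γ (i + 4)) := by
  have h := (F.commute_α_β₃_mul_α₁ i).inv_right.mul_right (F.commute_α_β₃_mul_γ₄ i)
  simpa [mul_assoc] using h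

theorem commute_α_α₁_mul_γ₃ : Commute (F.α i) (F.α (i + 1) * F.γ (i + 3)) := by
  have h := congrArg (MulAut.conj (F.y i)) (F.γ_mul_self (i + 5))
  have hγβ := F.γ₄_mul_β (i + 2)
  have hαα := F.commute_α_α₂ (i + 1)
  have hαγ := (F.commute_α_γ₂ (i + 1))
  simp only [add_assoc, Fin.reduceAdd, map_mul, map_one, conj_γ₅] at h hγβ hαα hαγ
  rw [hγβ] at h
  have ht := commute_of_involutions
    (mul_mul_self_of_commute hαγ (F.α_mul_self _) (F.γ_mul_self _))
    (mul_mul_self_of_commute (F.commute_α_α₃ i).symm (F.α_mul_self _) (F.α_mul_self _))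
    (by simpa only [mul_assoc] using h)
  simpa using (hαα.mul_left (F.commute_α_γ₀ (i + 3)).symm).mul_right ht |>.symm

/-- The commutator of the involutions `α (i + 1)` and `α i`. It is independent of `i`, central in
the group generated by the `y i`, and of order at most `2`. -/
def ζ : G := (F.α (i + 1) * F.α i) ^ 2

theorem sq_γ₃_mul_α : (F.γ (i + 3) * F.α i) ^ 2 = F.ζ i :=
  (sq_mul_eq_of_commute (F.α_mul_self _) (F.γ_mul_self _) (F.commute_α_α₁_mul_γ₃ i)).symm

theorem sq_γ₄_mul_α : (F.γ (i + 4) * F.α i) ^ 2 = F.ζ i :=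
  (sq_mul_eq_of_commute (F.α_mul_self _) (F.γ_mul_self _) (F.commute_α_α₁_mul_γ₄ i)).symm

theorem sq_α_mul_γ₅ : (F.α i * F.γ (i + 5)) ^ 2 = (F.ζ (i + 2))⁻¹ := by
  rw [sq_mul_eq_of_commute (F.α_mul_self _) (F.α_mul_self _) (F.commute_γ₅_α_mul_α₂ i),
    ← sq_γ₃_mul_α, inv_sq_mul_of_involutions (F.γ_mul_self _) (F.α_mul_self _)]
  simp only [add_assoc, Fin.reduceAdd]

theorem ζ_succ : F.ζ (i + 1) = (F.ζ i)⁻¹ := by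
  have h (i) : F.ζ (i + 3) = (F.ζ (i + 2))⁻¹ := by
    have h₁ := sq_mul_eq_of_commute (F.α_mul_self _) (F.γ_mul_self _) (F.commute_γ₅_α_mul_γ i)
    have h₂ := sq_mul_eq_of_commute (F.α_mul_self _) (F.γ_mul_self _)
      (F.commute_γ₄_α_mul_γ₂ (i + 3))
    have h₃ := F.sq_γ₄_mul_α (i + 3)
    simp only [add_assoc, Fin.reduceAdd, add_zero] at h₁ h₂ h₃
    rw [← sq_α_mul_γ₅, h₁, ← h₃, ← inv_sq_mul_of_involutions (F.α_mul_self _) (F.γ_mul_self _),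
      h₂, inv_sq_mul_of_involutions (F.γ_mul_self _) (F.γ_mul_self _)]
  simpa [add_assoc] using h (i + 5)

theorem ζ_add_one : F.ζ (i + 1) = F.ζ i := by
  have h (i) : F.ζ (i + 2) = F.ζ i := by
    simpa [ζ_succ, add_assoc] using F.ζ_succ (i + 1)
  have h₂ := h (i + 2)
  have h₄ := h (i + 4)
  have h₆ := h (i + 6)
  simp only [add_assoc, Fin.reduceAdd] at h₂ h₄ h₆
  rw [h₆, h₄, h₂, h]

theorem ζ_eq_ζ_zero : F.ζ i = F.ζ 0 := by
  induction i using Fin.induction with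
  | zero => rfl
  | succ i ih => rw [← Fin.coeSucc_eq_succ, ζ_add_one, ih]

theorem ζ_inv : (F.ζ i)⁻¹ = F.ζ i := by
  rw [← ζ_succ, ζ_add_one]

theorem ζ_mul_self : F.ζ i * F.ζ i = 1 := by
  rw [mul_eq_one_iff_eq_inv, ζ_inv]

theorem conj_ζ : MulAut.conj (F.y i) (F.ζ (i + 4)) = F.ζ (i + 4) := by
  have hβ := F.β_eq (i + 3)
  have hαγ := F.sq_α_mul_γ₅ (i + 2)
  simp only [add_assoc, Fin.reduceAdd, add_zero] at hβ hαγ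
  calc MulAut.conj (F.y i) (F.ζ (i + 4)) = (F.α i * (F.γ i * F.α (i + 2))) ^ 2 := by
        simp only [ζ, map_pow, map_mul, add_assoc, Fin.reduceAdd, conj_α₅, conj_α₄, hβ, mul_assoc,
          α_mul_cancel, γ_mul_self, mul_one]
    _ = (F.γ i * F.α (i + 2)) ^ 2 := by
        rw [((F.commute_α_γ₀ i).mul_right (F.commute_α_α₂ i)).mul_pow, sq, α_mul_self, one_mul]
    _ = F.ζ (i + 4) := by
        rw [← inv_sq_mul_of_involutions (F.α_mul_self _) (F.γ_mul_self _), hαγ, inv_inv]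

theorem commute_y_ζ (j : Fin 7) : Commute (F.y i) (F.ζ j) := by
  have h := F.conj_ζ i
  rw [ζ_eq_ζ_zero, ← F.ζ_eq_ζ_zero j, MulAut.conj_apply, mul_inv_eq_iff_eq_mul] at h
  exact h

theorem heptagon_β : F.β 3 * F.β 2 * F.β 1 * F.β 0 * F.β 6 * F.β 5 * F.β 4 = 1 := by
  simpa [β, mul_assoc] using congrArg (MulAut.conj (F.y 4)) (F.heptagon 0)

/-- The commutator of the involutions `α i` and `γ (i + 1)`, used when `ζ` is trivial: it is then
the last obstruction to the commutativity of `lineSubgroup`. -/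
def ω : G := (F.α i * F.γ (i + 1)) ^ 2

section
variable (hζ : F.ζ 0 = 1)
include hζ

theorem commute_α_α_of_ζ (j : Fin 7) : Commute (F.α i) (F.α j) := by
  have h (i) : Commute (F.α (i + 1)) (F.α i) :=
    commute_of_involutions (F.α_mul_self _) (F.α_mul_self _)
      (by rw [← sq]; exact (F.ζ_eq_ζ_zero i).trans hζ)
  obtain ⟨k, rfl⟩ : ∃ k, j = i + k := ⟨j - i, by simp⟩
  fin_cases k
  · simp
  · exact (h i).symm
  · exact F.commute_α_α₂ i
  · exact F.commute_α_α₃ i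
  · simpa [add_assoc] using (F.commute_α_α₃ (i + 4)).symm
  · simpa [add_assoc] using (F.commute_α_α₂ (i + 5)).symm
  · simpa [add_assoc] using h (i + 6)

theorem commute_α_γ_of_ζ {j : Fin 7} (hij : j ≠ i + 1) : Commute (F.α i) (F.γ j) := by
  have h₃ (i) : Commute (F.α i) (F.γ (i + 3)) := by
    simpa using (F.commute_α_α_of_ζ i hζ (i + 1)).mul_right (F.commute_α_α₁_mul_γ₃ i)
  obtain ⟨k, rfl⟩ : ∃ k, j = i + k := ⟨j - i, by simp⟩
  fin_cases k
  · simpa using F.commute_α_γ₀ i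
  · simp at hij
  · exact F.commute_α_γ₂ i
  · exact h₃ i
  · simpa using (F.commute_α_α_of_ζ i hζ (i + 1)).mul_right (F.commute_α_α₁_mul_γ₄ i)
  · have h := (h₃ (i + 2)).symm
    simp only [add_assoc, Fin.reduceAdd] at h
    simpa [mul_assoc] using ((F.commute_γ₅_α_mul_α₂ i).mul_right h).symm
  · have h := (F.commute_α_α_of_ζ (i + 6 + 1) hζ (i + 6)).mul_right (F.commute_α₁_α_mul_γ (i + 6))
    simpa [add_assoc] using h

theorem commute_γ_γ_of_ζ (j : Fin 7) : Commute (F.γ i) (F.γ j) := by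
  have h (i) : Commute (F.γ (i + 4)) (F.γ (i + 2)) := by
    have h := (F.commute_α_γ_of_ζ i hζ (j := i + 4) (by simp)).symm.mul_right
      (F.commute_γ₄_α_mul_γ₂ i)
    simpa using h
  obtain ⟨k, rfl⟩ : ∃ k, j = i + k := ⟨j - i, by simp⟩
  fin_cases k
  · simp
  · exact F.commute_γ_γ₁ i
  · simpa [add_assoc] using (h (i + 5)).symm
  · exact F.commute_γ_γ₃ i
  · simpa [add_assoc] using (F.commute_γ_γ₃ (i + 4)).symm
  · simpa [add_assoc] using h (i + 3)
  · simpa [add_assoc] using (F.commute_γ_γ₁ (i + 6)).symm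

theorem ω_add_six : F.ω (i + 6) = F.ω i := by
  have hγ₄ := (F.commute_α_γ_of_ζ i hζ (j := i + 4) (by simp)).mul_left
    (F.commute_γ_γ_of_ζ i hζ (i + 4))
  have hα₁ := (F.commute_α_α_of_ζ i hζ (i + 1)).mul_left
    (F.commute_α_γ_of_ζ (i + 1) hζ (j := i) (by simp [add_assoc])).symm
  have h : Commute (F.α i * F.γ i) (F.α (i + 6) * F.γ (i + 1)) := by
    have hβ := (F.commute_β_α_mul_γ i).symm
    rw [β_eq] at hβ
    simpa [mul_assoc] using hγ₄.mul_right (hβ.mul_right hα₁)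
  have hγα : F.γ i * F.α (i + 6) = F.α (i + 6) * ((F.α i * F.γ (i + 1)) ^ 2 * F.γ i) :=
    calc F.γ i * F.α (i + 6)
        = F.α i * (F.α i * F.γ i * (F.α (i + 6) * F.γ (i + 1))) * F.γ (i + 1) := by
          simp [mul_assoc]
      _ = F.α i * F.α (i + 6) * F.γ (i + 1) * F.α i * (F.γ i * F.γ (i + 1)) := by
          rw [h.eq]; simp only [mul_assoc]
      _ = _ := by
          rw [(F.commute_α_α_of_ζ i hζ (i + 6)).eq, (F.commute_γ_γ₁ i).eq]
          simp only [sq, mul_assoc]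
  simp only [ω, add_assoc, Fin.reduceAdd, add_zero]
  rw [sq, mul_assoc, ← mul_assoc (F.γ i), hγα]
  simp [mul_assoc]

theorem ω_eq_ω_zero : F.ω i = F.ω 0 := by
  induction i using Fin.induction with
  | zero => rfl
  | succ i ih =>
    have h := F.ω_add_six (i.castSucc + 1) hζ
    simp only [add_assoc, Fin.reduceAdd, add_zero, ih] at h
    rw [← Fin.coeSucc_eq_succ, ← h]

theorem commute_α_ω (j : Fin 7) : Commute (F.α i) (F.ω j) := by
  rw [F.ω_eq_ω_zero j hζ, ← F.ω_eq_ω_zero (i + 1) hζ, ω, add_assoc]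
  exact ((F.commute_α_α_of_ζ i hζ _).mul_right (F.commute_α_γ_of_ζ i hζ (by simp))).pow_right 2

theorem commute_γ_ω (j : Fin 7) : Commute (F.γ i) (F.ω j) := by
  rw [F.ω_eq_ω_zero j hζ, ← F.ω_eq_ω_zero i hζ, ω]
  exact ((F.commute_α_γ₀ i).symm.mul_right (F.commute_γ_γ₁ i)).pow_right 2

theorem ω_mul_self : F.ω i * F.ω i = 1 := by
  have h : F.α i * F.ω i * F.α i = (F.ω i)⁻¹ := by
    rw [ω, inv_sq_mul_of_involutions (F.α_mul_self i) (F.γ_mul_self (i + 1)), sq, sq]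
    simp [mul_assoc]
  rw [mul_eq_one_iff_eq_inv, ← h, (F.commute_α_ω i hζ i).eq, mul_assoc, α_mul_self, mul_one]

theorem ω_eq_one : F.ω i = 1 := by
  rw [F.ω_eq_ω_zero i hζ]
  have hα (i) (g : G) : F.α i * (F.ω 0 * g) = F.ω 0 * (F.α i * g) :=
    (F.commute_α_ω i hζ 0).left_comm g
  have hγ (i) (g : G) : F.γ i * (F.ω 0 * g) = F.ω 0 * (F.γ i * g) :=
    (F.commute_γ_ω i hζ 0).left_comm g
  have hω (g : G) : F.ω 0 * (F.ω 0 * g) = g := by rw [← mul_assoc, F.ω_mul_self 0 hζ, one_mul]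
  have hαα (i j) (g : G) : F.α i * (F.α j * g) = F.α j * (F.α i * g) :=
    (F.commute_α_α_of_ζ i hζ j).left_comm g
  have hγγ (i j) (g : G) : F.γ i * (F.γ j * g) = F.γ j * (F.γ i * g) :=
    (F.commute_γ_γ_of_ζ i hζ j).left_comm g
  have hαγ (i j) (hij : j ≠ i + 1) (g : G) : F.α i * (F.γ j * g) = F.γ j * (F.α i * g) :=
    (F.commute_α_γ_of_ζ i hζ hij).left_comm g
  have hαγ₁ (i j) (hij : j = i + 1) (g : G) :
      F.α i * (F.γ j * g) = F.ω 0 * (F.γ j * (F.α i * g)) := by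
    rw [← F.ω_eq_ω_zero i hζ, hij, ω, sq]
    simp [mul_assoc]
  have h := congrArg (· * (1 : G)) F.heptagon_β
  simpa (discharger := decide) only [β_eq, Fin.reduceAdd, mul_assoc, hαγ, hαγ₁, hα, hγ, hω, hαα,
    hγγ, α_mul_self, γ_mul_self, α_mul_cancel, γ_mul_cancel, mul_one] using h

theorem commute_α_γ (j : Fin 7) : Commute (F.α i) (F.γ j) := by
  obtain rfl | hij := eq_or_ne j (i + 1)
  · exact commute_of_involutions (F.α_mul_self i) (F.γ_mul_self _)
      (by rw [← sq]; exact F.ω_eq_one i hζ)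
  · exact F.commute_α_γ_of_ζ i hζ hij

end

/-- The normal subgroup with quotient `𝔽₈` in the group generated by the points. The `β i` belong
to it by `β_eq`. -/
def lineSubgroup : Subgroup G := Subgroup.closure (Set.range (Sum.elim F.α F.γ))

theorem card_lineSubgroup_le (hζ : F.ζ 0 = 1) :
    Finite F.lineSubgroup ∧ Nat.card F.lineSubgroup ≤ 2 ^ 14 := by
  have h := card_closure_le_two_pow (Set.finite_range (Sum.elim F.α F.γ))
    (by rintro _ ⟨i | i, rfl⟩ <;> simp) (by
      simp only [Set.forall_mem_range, Sum.forall, Sum.elim_inl, Sum.elim_inr]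
      exact ⟨fun i ↦ ⟨F.commute_α_α_of_ζ i hζ, F.commute_α_γ i hζ⟩,
        fun i ↦ ⟨fun j ↦ (F.commute_α_γ j hζ i).symm, F.commute_γ_γ_of_ζ i hζ⟩⟩)
  refine ⟨h.1, h.2.trans (Nat.pow_le_pow_right two_pos ?_)⟩
  rw [← Nat.card_coe_set_eq]
  simpa using Finite.card_range_le (Sum.elim F.α F.γ)

theorem exists_y_mul_y_mul_y_mem (j : Fin 7) (hij : i ≠ j) :
    ∃ k, F.y i * F.y j * F.y k ∈ F.lineSubgroup := by
  have hα (i) : F.α i ∈ F.lineSubgroup :=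
    Subgroup.subset_closure ⟨.inl i, rfl⟩
  have hγ (i) : F.γ i ∈ F.lineSubgroup :=
    Subgroup.subset_closure ⟨.inr i, rfl⟩
  have hβ (i) : F.β i ∈ F.lineSubgroup := by
    rw [β_eq]
    exact mul_mem (mul_mem (mul_mem (hγ _) (hα _)) (hγ _)) (hα _)
  obtain ⟨k, rfl⟩ : ∃ k, j = i + k := ⟨j - i, by simp⟩
  fin_cases k
  · simp at hij
  · exact ⟨i + 3, hα i⟩
  · exact ⟨i + 6, by simpa [β, add_assoc] using hβ (i + 6)⟩
  · exact ⟨i + 1, F.β_rev i ▸ hβ i⟩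
  · exact ⟨i + 5, by simpa [γ, add_assoc] using hγ (i + 4)⟩
  · exact ⟨i + 4, by simpa [α_rev, add_assoc] using hα (i + 4)⟩
  · exact ⟨i + 2, by simpa [γ_rev, add_assoc] using hγ (i + 6)⟩

theorem card_closure_le_of_ζ (hζ : F.ζ 0 = 1) :
    Finite (Subgroup.closure (Set.range F.y)) ∧
      Nat.card (Subgroup.closure (Set.range F.y)) ≤ 2 ^ 17 := by
  obtain ⟨hfin, hcard⟩ := F.card_lineSubgroup_le hζ
  have h := card_closure_le (S := Set.range F.y) F.lineSubgroup
    (fun v : Option (Fin 7) ↦ v.elim 1 F.y) ⟨none, one_mem _⟩ <| by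
      rintro _ ⟨j, rfl⟩ (_ | i)
      · exact ⟨some j, 1, one_mem _, by simp⟩
      · obtain rfl | hij := eq_or_ne i j
        · exact ⟨none, 1, one_mem _, by simp⟩
        · obtain ⟨k, hk⟩ := F.exists_y_mul_y_mul_y_mem i j hij
          exact ⟨some k, _, hk, by simp [mul_assoc]⟩
  refine ⟨h.1, h.2.trans ?_⟩
  rw [Nat.card_eq_fintype_card, Fintype.card_option, Fintype.card_fin]
  lia

/-- The image of a Fano system under a homomorphism. -/
def map {G' : Type*} [Group G'] (f : G →* G') : FanoSystem G' where
  y i := f (F.y i)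
  y_mul_self i := by simp [← map_mul]
  line_sq i := by simp only [← map_mul, line_sq, map_one]
  mul_pow_four i := by simp only [← map_mul, ← map_pow, mul_pow_four, map_one]
  quad_sq i := by simp only [← map_mul, quad_sq, map_one]
  heptagon i := by simp only [← map_mul, heptagon, map_one]

theorem map_ζ {G' : Type*} [Group G'] (f : G →* G') : (F.map f).ζ i = f (F.ζ i) := by
  simp [ζ, α, map]

/-- A Fano system, seen inside the subgroup which it generates. -/
def restrict : FanoSystem (Subgroup.closure (Set.range F.y)) where
  y i := ⟨F.y i, Subgroup.subset_closure ⟨i, rfl⟩⟩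
  y_mul_self i := Subtype.ext (F.y_mul_self i)
  line_sq i := Subtype.ext (F.line_sq i)
  mul_pow_four i := Subtype.ext (F.mul_pow_four i)
  quad_sq i := Subtype.ext (F.quad_sq i)
  heptagon i := Subtype.ext (F.heptagon i)

theorem closure_range_restrict_y : Subgroup.closure (Set.range F.restrict.y) = ⊤ := by
  convert Subgroup.closure_closure_coe_preimage (k := Set.range F.y)
  ext ⟨g, hg⟩
  simp [restrict]

theorem ζ_mem_center (h : Subgroup.closure (Set.range F.y) = ⊤) : F.ζ i ∈ Subgroup.center G := by
  rw [← Subgroup.centralizer_univ, ← Subgroup.coe_top, ← h, Subgroup.centralizer_closure]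
  simp only [Subgroup.mem_centralizer_iff, Set.forall_mem_range]
  exact fun j ↦ F.commute_y_ζ j i

theorem card_le_of_closure_eq_top (h : Subgroup.closure (Set.range F.y) = ⊤) :
    Finite G ∧ Nat.card G ≤ 2 ^ 18 := by
  have hcenter := F.ζ_mem_center 0 h
  have hnormal : (Subgroup.zpowers (F.ζ 0)).Normal :=
    ⟨fun n hn g ↦ by
      rwa [Subgroup.mem_center_iff.1 (Subgroup.zpowers_le.2 hcenter hn) g, mul_inv_cancel_right]⟩
  set q := QuotientGroup.mk' (Subgroup.zpowers (F.ζ 0))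
  have hq : Subgroup.closure (Set.range (F.map q).y) = ⊤ := by
    rw [show (F.map q).y = q ∘ F.y from rfl, Set.range_comp, ← MonoidHom.map_closure, h,
      Subgroup.map_top_of_surjective _ (QuotientGroup.mk'_surjective _)]
  have hquot := (F.map q).card_closure_le_of_ζ (by simp [map_ζ, q])
  rw [hq, Subgroup.card_top] at hquot
  have hfin := Subgroup.topEquiv.toEquiv.finite_iff.1 hquot.1
  have hsq : F.ζ 0 ^ 2 = 1 := (sq _).trans (F.ζ_mul_self 0)
  have hζ : Nat.card (Subgroup.zpowers (F.ζ 0)) ≤ 2 := by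
    rw [Nat.card_zpowers]
    exact orderOf_le_of_pow_eq_one two_pos hsq
  have hζfin : Finite (Subgroup.zpowers (F.ζ 0)) :=
    (isOfFinOrder_iff_pow_eq_one.2 ⟨2, two_pos, hsq⟩).finite_zpowers
  have hcard := Subgroup.card_eq_card_quotient_mul_card_subgroup (Subgroup.zpowers (F.ζ 0))
  refine ⟨Nat.finite_of_card_ne_zero (hcard ▸ mul_ne_zero Nat.card_pos.ne' Nat.card_pos.ne'), ?_⟩
  rw [hcard, pow_succ]
  exact Nat.mul_le_mul hquot.2 hζ

theorem card_closure_le :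
    Finite (Subgroup.closure (Set.range F.y)) ∧
      Nat.card (Subgroup.closure (Set.range F.y)) ≤ 2 ^ 18 :=
  F.restrict.card_le_of_closure_eq_top F.closure_range_restrict_y

end FanoSystem

/-- A Fano system whose points are permuted cyclically by an element `c` with `c⁷ = 1`, given by its
relations at the index `0`. -/
structure CyclicFanoSystem (G : Type*) [Group G] where
  y : Fin 7 → G
  c : G
  c_pow_seven : c ^ 7 = 1
  conj_c (i) : MulAut.conj c (y i) = y (i + 1)
  y_zero_mul_self : y 0 * y 0 = 1
  line_sq : y 0 * y 1 * y 3 * (y 0 * y 1 * y 3) = 1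
  mul_pow_four : (y 0 * y 1) ^ 4 = 1
  quad_sq : y 4 * y 3 * y 2 * y 0 * (y 4 * y 3 * y 2 * y 0) = 1
  heptagon : y 6 * y 5 * y 4 * y 3 * y 2 * y 1 * y 0 = 1

namespace CyclicFanoSystem

variable {G : Type*} [Group G] (K : CyclicFanoSystem G) (i : Fin 7)

theorem c_mul_y : K.c * K.y i = K.y (i + 1) * K.c := by
  rw [← conj_c, MulAut.conj_apply, inv_mul_cancel_right]

theorem conj_c_pow (n : ℕ) : MulAut.conj (K.c ^ n) (K.y i) = K.y (n • 1 + i) := by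
  induction n with
  | zero => simp
  | succ n ih =>
    rw [pow_succ', map_mul, MulAut.mul_apply, ih, conj_c, succ_nsmul, add_right_comm]

theorem conj_c_pow_val (k : Fin 7) : MulAut.conj (K.c ^ (i : ℕ)) (K.y k) = K.y (i + k) := by
  have h : ∀ j : Fin 7, (j : ℕ) • (1 : Fin 7) = j := by decide
  rw [conj_c_pow, h]

/-- The underlying Fano system, with all conjugates of the relations under powers of `c`. -/
def toFanoSystem : FanoSystem G where
  y := K.y
  y_mul_self i := by
    simpa only [map_mul, map_one, conj_c_pow_val, add_zero] using
      congrArg (MulAut.conj (K.c ^ (i : ℕ))) K.y_zero_mul_self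
  line_sq i := by
    simpa only [map_mul, map_one, conj_c_pow_val, add_zero] using
      congrArg (MulAut.conj (K.c ^ (i : ℕ))) K.line_sq
  mul_pow_four i := by
    have h := congrArg (MulAut.conj (K.c ^ (i : ℕ))) K.mul_pow_four
    rw [map_pow, map_one] at h
    simpa only [map_mul, conj_c_pow_val, add_zero] using h
  quad_sq i := by
    simpa only [map_mul, map_one, conj_c_pow_val, add_zero] using
      congrArg (MulAut.conj (K.c ^ (i : ℕ))) K.quad_sq
  heptagon i := by
    simpa only [map_mul, map_one, conj_c_pow_val, add_zero] using
      congrArg (MulAut.conj (K.c ^ (i : ℕ))) K.heptagon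

theorem c_inv : K.c⁻¹ = K.c ^ 6 :=
  inv_eq_pow_six_of_pow_seven K.c_pow_seven

@[simp] theorem c_mul_cancel (g : G) :
    K.c * (K.c * (K.c * (K.c * (K.c * (K.c * (K.c * g)))))) = g :=
  mul_cancel_left_of_pow_seven K.c_pow_seven g

@[simp] theorem c_mul_c : K.c * (K.c * (K.c * (K.c * (K.c * (K.c * K.c))))) = 1 := by
  simpa using K.c_mul_cancel 1

@[simp] theorem y_mul_self : K.y i * K.y i = 1 := K.toFanoSystem.y_mul_self i

@[simp] theorem y_inv : (K.y i)⁻¹ = K.y i := K.toFanoSystem.y_inv i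

@[simp] theorem y_mul_cancel (g : G) : K.y i * (K.y i * g) = g :=
  K.toFanoSystem.y_mul_cancel i g

theorem c_mul_y_mul (g : G) : K.c * (K.y i * g) = K.y (i + 1) * (K.c * g) := by
  rw [← mul_assoc, c_mul_y, mul_assoc]

theorem y_mem_closure : K.y i ∈ Subgroup.closure {K.c, K.y 0} := by
  have hc : K.c ^ (i : ℕ) ∈ Subgroup.closure {K.c, K.y 0} :=
    pow_mem (Subgroup.subset_closure (.inl rfl)) _
  rw [← add_zero i, ← conj_c_pow_val, MulAut.conj_apply]
  exact mul_mem (mul_mem hc (Subgroup.subset_closure (.inr rfl))) (inv_mem hc)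

theorem card_closure_c_y_le :
    Finite (Subgroup.closure {K.c, K.y 0}) ∧
      Nat.card (Subgroup.closure {K.c, K.y 0}) ≤ 7 * 2 ^ 18 := by
  obtain ⟨hfin, hcard⟩ := K.toFanoSystem.card_closure_le
  have h := card_closure_le (S := {K.c, K.y 0}) (Subgroup.closure (Set.range K.toFanoSystem.y))
    (fun k : Fin 7 ↦ K.c ^ (k : ℕ)) ⟨0, by simp⟩ <| by
      simp only [Set.forall_mem_insert, Set.mem_singleton_iff, forall_eq]
      refine ⟨fun k ↦ ⟨k + 1, 1, one_mem _, ?_⟩,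
        fun k ↦ ⟨k, K.y k, Subgroup.subset_closure ⟨k, rfl⟩, ?_⟩⟩
      · simp [pow_val_add_of_pow_eq_one K.c_pow_seven]
      · rw [← mul_inv_eq_iff_eq_mul, ← MulAut.conj_apply, conj_c_pow_val, add_zero]
  exact ⟨h.1, h.2.trans (by rw [Nat.card_fin]; gcongr)⟩

end CyclicFanoSystem

/-- The mirror automorphism `S = B²CB²C⁴BC⁴` in terms of `A = a` and `C = c`, where
`B = ac⁻¹` and `B² = ca`. -/
def mirrorWord {G : Type*} [Group G] (a c : G) : G := c * a * c ^ 2 * a * c ^ 4 * a * c ^ 3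

/-- The images `a` and `c` of the generators `A` and `C` in a quotient of the Hurwitz group with
mirror automorphism of order dividing `4`. The relation `(ac⁻¹)³ = 1` is solved for `aca`. -/
structure HurwitzPair (G : Type*) [Group G] where
  a : G
  c : G
  a_mul_self : a * a = 1
  c_pow_seven : c ^ 7 = 1
  a_mul_c_mul_a : a * c * a = c⁻¹ * a * c⁻¹
  mirrorWord_pow_four : mirrorWord a c ^ 4 = 1

namespace HurwitzPair

variable {G : Type*} [Group G] (P : HurwitzPair G)

/-- The mirror automorphism. -/
abbrev mirror : G := mirrorWord P.a P.c

/-- The points of the Fano system attached to a Hurwitz pair. -/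
def y (i : Fin 7) : G := MulAut.conj (P.c ^ (i : ℕ)) (P.a * P.c ^ 5 * P.a * P.c ^ 2 * P.a)

attribute [simp] a_mul_self

@[simp] theorem a_mul_cancel (g : G) : P.a * (P.a * g) = g := by
  rw [← mul_assoc, P.a_mul_self, one_mul]

@[simp] theorem a_inv : P.a⁻¹ = P.a := inv_eq_of_mul_eq_one_right P.a_mul_self

theorem c_inv : P.c⁻¹ = P.c ^ 6 :=
  inv_eq_pow_six_of_pow_seven P.c_pow_seven

@[simp] theorem c_mul_cancel (g : G) :
    P.c * (P.c * (P.c * (P.c * (P.c * (P.c * (P.c * g)))))) = g :=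
  mul_cancel_left_of_pow_seven P.c_pow_seven g

@[simp] theorem c_mul_c : P.c * (P.c * (P.c * (P.c * (P.c * (P.c * P.c))))) = 1 := by
  simpa using P.c_mul_cancel 1

theorem y_zero : P.y 0 = P.a * P.c ^ 5 * P.a * P.c ^ 2 * P.a := by simp [y]

theorem conj_c_y (i : Fin 7) : MulAut.conj P.c (P.y i) = P.y (i + 1) := by
  rw [y, y, ← MulAut.mul_apply, ← map_mul, add_comm, pow_val_add_of_pow_eq_one P.c_pow_seven,
    Fin.val_one, pow_one]

theorem y_zero_mul_self : P.y 0 * P.y 0 = 1 := by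
  simp [y_zero, pow_succ, mul_assoc]

@[simp] theorem y_zero_mul_cancel (g : G) : P.y 0 * (P.y 0 * g) = g := by
  rw [← mul_assoc, y_zero_mul_self, one_mul]

theorem a_mul_c_six_mul_a : P.a * P.c ^ 6 * P.a = P.c * P.a * P.c := by
  simpa [← c_inv, mul_assoc] using congrArg (·⁻¹) P.a_mul_c_mul_a

theorem a_mul_c_two_mul_a : P.a * P.c ^ 2 * P.a = P.c⁻¹ * P.y 0 * P.a * P.c ^ 4 :=
  calc P.a * P.c ^ 2 * P.a = P.a * P.c * P.a * (P.a * P.c * P.a) := by simp [pow_succ, mul_assoc]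
    _ = P.c⁻¹ * P.y 0 * P.a * P.c ^ 4 := by
        rw [a_mul_c_mul_a, y_zero]
        simp [c_inv, pow_succ, mul_assoc]

theorem a_mul_c_four_mul_a : P.a * P.c ^ 4 * P.a = P.y 0 * P.c * P.a * P.c ^ 2 :=
  calc P.a * P.c ^ 4 * P.a = P.a * P.c ^ 5 * (P.c⁻¹ * P.a * P.c⁻¹) * P.c := by
        simp [c_inv, pow_succ, mul_assoc]
    _ = P.a * P.c ^ 5 * P.a * P.c ^ 2 * (P.c⁻¹ * P.a * P.c⁻¹) * P.c ^ 2 := by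
        conv_lhs => rw [← a_mul_c_mul_a]
        simp [c_inv, pow_succ, mul_assoc]
    _ = P.y 0 * P.c * P.a * P.c ^ 2 := by
        rw [← a_mul_c_mul_a, y_zero]
        simp [mul_assoc]

theorem a_mul_c_five_mul_a : P.a * P.c ^ 5 * P.a = P.y 0 * P.a * P.c ^ 5 := by
  simp [y_zero, pow_succ, mul_assoc]

theorem semiconjBy_a_mul_c_three_mul_a :
    SemiconjBy (P.a * P.c ^ 3 * P.a) P.c (P.c⁻¹ * P.y 0) :=
  calc P.a * P.c ^ 3 * P.a * P.c = P.a * P.c ^ 2 * (P.c * P.a * P.c) := by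
        simp [pow_succ, mul_assoc]
    _ = P.a * P.c * (P.c * P.a * P.c) * P.c ^ 5 * P.a := by
        conv_lhs => rw [← a_mul_c_six_mul_a]
        simp [pow_succ, mul_assoc]
    _ = P.a * P.c * P.a * P.c ^ 6 * P.a * P.c ^ 5 * P.a := by
        rw [← a_mul_c_six_mul_a]
        simp [mul_assoc]
    _ = P.c⁻¹ * P.y 0 * (P.a * P.c ^ 3 * P.a) := by
        rw [a_mul_c_mul_a, y_zero]
        simp [c_inv, pow_succ, mul_assoc]

theorem a_mul_c_mul_mirror :
    P.a * P.c * P.mirror = P.c⁻¹ * P.y 0 * P.c * P.y 0 * (P.a * P.c) :=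
  calc P.a * P.c * P.mirror = P.a * P.c ^ 2 * P.a * P.c ^ 2 * P.a * P.c ^ 4 * P.a * P.c ^ 3 := by
        simp [mirrorWord, pow_succ, mul_assoc]
    _ = P.c⁻¹ * P.y 0 * (P.a * P.c ^ 6 * P.a) * P.c ^ 4 * P.a * P.c ^ 3 := by
        rw [a_mul_c_two_mul_a]
        simp [pow_succ, mul_assoc]
    _ = P.c⁻¹ * P.y 0 * P.c * (P.a * P.c ^ 5 * P.a) * P.c ^ 3 := by
        rw [a_mul_c_six_mul_a]
        simp [pow_succ, mul_assoc]
    _ = P.c⁻¹ * P.y 0 * P.c * P.y 0 * (P.a * P.c) := by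
        rw [a_mul_c_five_mul_a]
        simp [pow_succ, mul_assoc]

theorem a_mul_c_three_mul_mirror :
    P.a * P.c ^ 3 * P.mirror = P.y 0 * P.c * P.y 0 * P.c ^ 2 * (P.a * P.c ^ 4) :=
  calc P.a * P.c ^ 3 * P.mirror
      = P.a * P.c ^ 4 * P.a * P.c ^ 2 * P.a * P.c ^ 4 * P.a * P.c ^ 3 := by
        simp [mirrorWord, pow_succ, mul_assoc]
    _ = P.y 0 * P.c * (P.a * P.c ^ 4 * P.a) * P.c ^ 4 * P.a * P.c ^ 3 := by
        conv_lhs => rw [a_mul_c_four_mul_a]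
        simp [pow_succ, mul_assoc]
    _ = P.y 0 * P.c * P.y 0 * P.c * (P.a * P.c ^ 6 * P.a) * P.c ^ 3 := by
        conv_lhs => rw [a_mul_c_four_mul_a]
        simp [pow_succ, mul_assoc]
    _ = P.y 0 * P.c * P.y 0 * P.c ^ 2 * (P.a * P.c ^ 4) := by
        rw [a_mul_c_six_mul_a]
        simp [pow_succ, mul_assoc]

theorem a_mul_c_four_mul_mirror : P.a * P.c ^ 4 * P.mirror = P.y 0 * P.c ^ 4 * (P.a * P.c ^ 3) :=
  calc P.a * P.c ^ 4 * P.mirror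
      = P.a * P.c ^ 5 * P.a * P.c ^ 2 * P.a * P.c ^ 4 * P.a * P.c ^ 3 := by
        simp [mirrorWord, pow_succ, mul_assoc]
    _ = P.y 0 * P.c ^ 4 * (P.a * P.c ^ 3) := by
        rw [y_zero]
        simp [mul_assoc]

theorem a_mul_mirror :
    P.a * P.mirror = P.c⁻¹ ^ 2 * (P.c⁻¹ * P.y 0) ^ 3 * (P.a * P.c ^ 3 * P.a) := by
  have hZ : P.a * P.c ^ 3 * P.a * P.c ^ 3 = (P.c⁻¹ * P.y 0) ^ 3 * (P.a * P.c ^ 3 * P.a) :=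
    (P.semiconjBy_a_mul_c_three_mul_a.pow_right 3).eq
  calc P.a * P.mirror
      = P.a * P.c * P.a * P.c ^ 2 * P.a * P.c ^ 4 * P.a * P.c ^ 3 := by
        simp [mirrorWord, pow_succ, mul_assoc]
    _ = P.c⁻¹ * (P.a * P.c * P.a) * P.c ^ 4 * P.a * P.c ^ 3 := by
        conv_lhs => rw [a_mul_c_mul_a]
        simp [pow_succ, mul_assoc]
    _ = P.c⁻¹ ^ 2 * (P.a * P.c ^ 3 * P.a * P.c ^ 3) := by
        rw [a_mul_c_mul_a]
        simp [pow_succ, mul_assoc]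
    _ = _ := by rw [hZ]; simp only [mul_assoc]

theorem a_mul_c_three_mul_a_mul_mirror :
    P.a * P.c ^ 3 * P.a * P.mirror = P.c⁻¹ ^ 2 * P.y 0 * P.a :=
  calc P.a * P.c ^ 3 * P.a * P.mirror
      = P.a * P.c ^ 3 * P.a * P.c * P.a * P.c ^ 2 * P.a * P.c ^ 4 * P.a * P.c ^ 3 := by
        simp [mirrorWord, pow_succ, mul_assoc]
    _ = P.c⁻¹ * P.y 0 * (P.a * P.c ^ 5 * P.a) * P.c ^ 4 * P.a * P.c ^ 3 := by
        rw [P.semiconjBy_a_mul_c_three_mul_a.eq]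
        simp [pow_succ, mul_assoc]
    _ = P.c⁻¹ * (P.a * P.c ^ 2 * P.a) * P.c ^ 3 := by
        rw [a_mul_c_five_mul_a]
        simp [pow_succ, mul_assoc]
    _ = P.c⁻¹ ^ 2 * P.y 0 * P.a := by
        rw [a_mul_c_two_mul_a]
        simp [pow_succ, mul_assoc]

theorem y_eq (i : Fin 7) : P.y i = P.c ^ (i : ℕ) * P.y 0 * (P.c ^ (i : ℕ))⁻¹ := by
  rw [y, y_zero, MulAut.conj_apply]

theorem conj_mirror_pow (g : G) : MulAut.conj g (P.mirror) ^ 4 = 1 := by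
  rw [← map_pow, P.mirrorWord_pow_four, map_one]

theorem y_line : P.y 0 * P.y 1 * P.y 3 = MulAut.conj (P.a * P.c ^ 3) P.mirror ^ 2 := by
  have h : P.a * P.c ^ 3 * P.mirror * P.mirror = P.y 0 * P.y 1 * P.y 3 * (P.a * P.c ^ 3) := by
    rw [a_mul_c_three_mul_mirror, mul_assoc, a_mul_c_four_mul_mirror, P.y_eq 1, P.y_eq 3]
    simp [c_inv, pow_succ, mul_assoc]
  rw [← map_pow, MulAut.conj_apply, eq_mul_inv_iff_mul_eq, ← h, sq, mul_assoc, mul_assoc]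

theorem y_edge : P.y 0 * P.y 1 = MulAut.conj (P.c * P.a * P.c) P.mirror := by
  rw [MulAut.conj_apply, eq_mul_inv_iff_mul_eq, mul_assoc P.c, mul_assoc P.c, a_mul_c_mul_mirror,
    P.y_eq 1]
  simp [c_inv, pow_succ, mul_assoc]

theorem y_quad : P.y 4 * P.y 3 * P.y 2 * P.y 0 = MulAut.conj P.a P.mirror ^ 2 := by
  have h : P.a * P.mirror * P.mirror = P.y 4 * P.y 3 * P.y 2 * P.y 0 * P.a := by
    rw [a_mul_mirror, mul_assoc, a_mul_c_three_mul_a_mul_mirror, P.y_eq 4, P.y_eq 3, P.y_eq 2]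
    simp [c_inv, pow_succ, mul_assoc]
  rw [← map_pow, MulAut.conj_apply, eq_mul_inv_iff_mul_eq, ← h, sq, mul_assoc]

theorem y_heptagon :
    P.y 6 * P.y 5 * P.y 4 * P.y 3 * P.y 2 * P.y 1 * P.y 0 = 1 := by
  have h : (P.c⁻¹ * P.y 0) ^ 7 = 1 := by
    have h := P.semiconjBy_a_mul_c_three_mul_a.pow_right 7
    rw [c_pow_seven] at h
    exact mul_eq_right.1 (h.eq.symm.trans (mul_one _))
  rw [← h, P.y_eq 6, P.y_eq 5, P.y_eq 4, P.y_eq 3, P.y_eq 2, P.y_eq 1]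
  simp [c_inv, pow_succ, mul_assoc]

/-- The Fano system of the conjugates of `y 0` under the powers of `c`. -/
def toCyclicFanoSystem : CyclicFanoSystem G where
  y := P.y
  c := P.c
  c_pow_seven := P.c_pow_seven
  conj_c := P.conj_c_y
  y_zero_mul_self := P.y_zero_mul_self
  line_sq := by rw [y_line, ← sq, ← pow_mul, conj_mirror_pow]
  mul_pow_four := by rw [y_edge, conj_mirror_pow]
  quad_sq := by rw [y_quad, ← sq, ← pow_mul, conj_mirror_pow]
  heptagon := P.y_heptagon

/-- Representatives of the nine right cosets of `⟨c, y₀⟩` in `⟨a, c⟩`. -/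
def rep : Fin 7 ⊕ Bool → G
  | .inl k => P.a * P.c ^ (k : ℕ)
  | .inr false => 1
  | .inr true => P.a * P.c ^ 3 * P.a

theorem card_closure_a_c_le :
    Finite (Subgroup.closure {P.a, P.c}) ∧
      Nat.card (Subgroup.closure {P.a, P.c}) ≤ 9 * 7 * 2 ^ 18 := by
  obtain ⟨hfin, hcard⟩ : Finite (Subgroup.closure {P.c, P.y 0}) ∧
      Nat.card (Subgroup.closure {P.c, P.y 0}) ≤ 7 * 2 ^ 18 :=
    P.toCyclicFanoSystem.card_closure_c_y_le
  have hc : P.c ∈ Subgroup.closure {P.c, P.y 0} := Subgroup.subset_closure (.inl rfl)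
  have hc' : P.c⁻¹ ∈ Subgroup.closure {P.c, P.y 0} := inv_mem hc
  have hy : P.y 0 ∈ Subgroup.closure {P.c, P.y 0} := Subgroup.subset_closure (.inr rfl)
  have h := card_closure_le (S := {P.a, P.c}) (Subgroup.closure {P.c, P.y 0})
    P.rep ⟨.inr false, one_mem _⟩ <| by
      simp only [Set.forall_mem_insert, Set.mem_singleton_iff, forall_eq, Sum.forall,
        Bool.forall_bool]
      refine ⟨⟨fun k ↦ ?_, ⟨.inl 0, 1, one_mem _, by simp [rep]⟩,
        ⟨.inl 3, 1, one_mem _, by simp [rep, mul_assoc]⟩⟩,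
        fun k ↦ ⟨.inl (k + 1), 1, one_mem _,
          by simp [rep, mul_assoc, pow_val_add_of_pow_eq_one P.c_pow_seven]⟩,
        ⟨.inr false, _, hc, by simp [rep]⟩,
        ⟨.inr true, _, mul_mem hc' hy, P.semiconjBy_a_mul_c_three_mul_a.eq⟩⟩
      fin_cases k <;> simp only [rep]
      · exact ⟨.inr false, 1, one_mem _, by simp⟩
      · exact ⟨.inl 6, _, hc', by simpa [← c_inv, mul_assoc] using P.a_mul_c_mul_a⟩
      · exact ⟨.inl 4, _, mul_mem hc' hy, by simpa [mul_assoc] using P.a_mul_c_two_mul_a⟩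
      · exact ⟨.inr true, 1, one_mem _, by simp⟩
      · exact ⟨.inl 2, _, mul_mem hy hc, by simpa [mul_assoc] using P.a_mul_c_four_mul_a⟩
      · exact ⟨.inl 5, _, hy, by simpa [mul_assoc] using P.a_mul_c_five_mul_a⟩
      · exact ⟨.inl 1, _, hc, by simpa [mul_assoc] using P.a_mul_c_six_mul_a⟩
  exact ⟨h.1, h.2.trans (by rw [mul_assoc]; gcongr; simp)⟩

end HurwitzPair

section Monomial

variable {ι G : Type*} [Group G]

/-- The monomial permutation of `ι × G` moving block `i` to block `σ i` with label `w i`. -/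
def monomial (σ : Equiv.Perm ι) (w : ι → G) : Equiv.Perm (ι × G) :=
  σ.prodShear fun i ↦ .mulLeft (w i)

@[simp] theorem monomial_apply (σ : Equiv.Perm ι) (w : ι → G)
    (x : ι × G) : monomial σ w x = (σ x.1, w x.1 * x.2) := rfl

/-- The group of the permutations of `ι × G` which commute with right multiplication on `G`, that
is, of the monomial permutations. -/
def monomialGroup (ι G : Type*) [Group G] : Subgroup (Equiv.Perm (ι × G)) where
  carrier := {f | ∀ x h, f (x.1, x.2 * h) = ((f x).1, (f x).2 * h)}
  one_mem' _ _ := rfl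
  mul_mem' {f f'} hf hf' x h := by simp [hf' x h, hf (f' x) h]
  inv_mem' {f} hf x h := by
    have := hf (f⁻¹ x) h
    rw [Equiv.Perm.inv_eq_iff_eq, this]
    simp

theorem monomial_mem_monomialGroup (σ : Equiv.Perm ι) (w : ι → G) :
    monomial σ w ∈ monomialGroup ι G :=
  fun x h ↦ by simp [mul_assoc]

theorem eq_one_of_mem_monomialGroup {f : Equiv.Perm (ι × G)} (hf : f ∈ monomialGroup ι G)
    (h : ∀ i, f (i, 1) = (i, 1)) : f = 1 := by
  ext1 ⟨i, g⟩
  simpa [h] using hf (i, 1) g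

/-- The labels of the elements of `T` that fix the block `i`. -/
def labelSubgroup (T : Subgroup (Equiv.Perm (ι × G))) (i : ι) : Subgroup G where
  carrier := {l | ∃ t ∈ T, ∀ g, t (i, g) = (i, l * g)}
  one_mem' := ⟨1, one_mem T, fun g ↦ by simp⟩
  mul_mem' := by
    rintro k l ⟨s, hs, hsk⟩ ⟨t, ht, htl⟩
    exact ⟨s * t, mul_mem hs ht, fun g ↦ by simp [htl, hsk, mul_assoc]⟩
  inv_mem' := by
    rintro l ⟨t, ht, htl⟩
    exact ⟨t⁻¹, inv_mem ht, fun g ↦ by rw [Equiv.Perm.inv_eq_iff_eq, htl, mul_inv_cancel_left]⟩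

theorem mem_labelSubgroup_of_apply_one {T : Subgroup (Equiv.Perm (ι × G))} {i : ι}
    {f : Equiv.Perm (ι × G)} {l : G} (hf : f ∈ monomialGroup ι G) (hT : f ∈ T)
    (h : f (i, 1) = (i, l)) : l ∈ labelSubgroup T i :=
  ⟨f, hT, fun g ↦ by simpa [h] using hf (i, 1) g⟩

theorem card_mul_card_mul_card_le {T M : Subgroup (Equiv.Perm (ι × G))} [Finite T]
    {L : Subgroup G} {i₀ : ι} (hMT : M ≤ T)
    (hfix : M ≤ MulAction.stabilizer (Equiv.Perm (ι × G)) (i₀, (1 : G)))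
    (hL : L ≤ labelSubgroup T i₀) (hT : ∀ i, ∃ t ∈ T, ∀ g, t (i₀, g) = (i, g)) :
    Nat.card M * (Nat.card ι * Nat.card L) ≤ Nat.card T := by
  have hmem : ∀ x ∈ (Set.univ : Set ι) ×ˢ (L : Set G), ∃ t ∈ T, t • (i₀, (1 : G)) = x := by
    rintro ⟨i, l⟩ ⟨-, hl⟩
    obtain ⟨s, hs, hsl⟩ := hL hl
    obtain ⟨t, ht, hti⟩ := hT i
    exact ⟨t * s, mul_mem ht hs, by simp [hsl, hti]⟩
  calc Nat.card M * (Nat.card ι * Nat.card L)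
      = Nat.card M * ((Set.univ : Set ι) ×ˢ (L : Set G)).ncard := by
        rw [Set.ncard_prod, Set.ncard_univ]; rfl
    _ ≤ Nat.card T := card_mul_ncard_le hMT hfix hmem

end Monomial

namespace CyclicFanoSystem

variable {G : Type*} [Group G] (K : CyclicFanoSystem G)

theorem c_inv_mul_y_pow_seven : (K.c⁻¹ * K.y 0) ^ 7 = 1 := by
  rw [← K.heptagon]
  simp [c_inv, pow_succ, mul_assoc, c_mul_y, c_mul_y_mul]

/-- The nine blocks of the induced action, standing for the left cosets of `⟨c, y₀⟩` in the group
`⟨a, c⟩` to be constructed: `.inl k` for that of `c⁻ᵏa`, `.inr false` for that of `1`, and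
`.inr true` for that of `ac³a`. -/
abbrev Block := Fin 7 ⊕ Bool

/-- The action of `a` on the blocks. -/
def aBlock : Equiv.Perm Block :=
  Function.Involutive.toPerm
    (Sum.elim ![.inr false, .inl 6, .inl 4, .inr true, .inl 2, .inl 5, .inl 1]
      fun z ↦ bif z then .inl 3 else .inl 0) <| by
    unfold Function.Involutive; decide

/-- The labels by which `a` acts on the blocks. -/
def aLabel : Block → G :=
  Sum.elim ![1, K.c, K.y 0 * K.c, 1, K.c⁻¹ * K.y 0, K.y 0, K.c⁻¹] fun _ ↦ 1

/-- The labels by which `c` acts on the blocks. -/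
def cLabel : Block → G :=
  Sum.elim (fun _ ↦ 1) fun z ↦ bif z then K.c⁻¹ * K.y 0 else K.c

/-- The action of `a` induced from `K`. -/
def blockA : Equiv.Perm (Block × G) := monomial aBlock K.aLabel

/-- The action of `c` induced from `K`. -/
def blockC : Equiv.Perm (Block × G) :=
  monomial ((Equiv.subRight 1).sumCongr (.refl _)) K.cLabel

@[simp] theorem blockA_apply (i : Block) (g : G) :
    K.blockA (i, g) = (aBlock i, K.aLabel i * g) := rfl

@[simp] theorem blockC_inl (k : Fin 7) (g : G) : K.blockC (.inl k, g) = (.inl (k - 1), g) := by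
  simp [blockC, cLabel]

@[simp] theorem blockC_inr_false (g : G) : K.blockC (.inr false, g) = (.inr false, K.c * g) := by
  simp [blockC, cLabel]

@[simp] theorem blockC_inr_true (g : G) :
    K.blockC (.inr true, g) = (.inr true, K.c⁻¹ * K.y 0 * g) := by
  simp [blockC, cLabel]

theorem blockC_pow_inl (n : ℕ) (k : Fin 7) (g : G) :
    (K.blockC ^ n) (.inl k, g) = (.inl (k - n • 1), g) := by
  induction n with
  | zero => simp
  | succ n ih => simp [pow_succ', ih, succ_nsmul, sub_sub]

theorem blockA_mul_self : K.blockA * K.blockA = 1 := by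
  ext1 ⟨i, g⟩
  rcases i with k | _ | _
  on_goal 1 => fin_cases k
  all_goals simp [aBlock, aLabel, mul_assoc]

theorem blockC_pow_seven : K.blockC ^ 7 = 1 := by
  ext1 ⟨k | _ | _, g⟩
  · have h : (7 • 1 : Fin 7) = 0 := rfl
    rw [blockC_pow_inl, h, sub_zero, Equiv.Perm.one_apply]
  · simp [pow_succ]
  · simpa [pow_succ, mul_assoc] using congrArg (· * g) K.c_inv_mul_y_pow_seven

theorem blockA_mul_blockC_mul_blockA :
    K.blockA * K.blockC * K.blockA = K.blockC⁻¹ * K.blockA * K.blockC⁻¹ := by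
  have h : (-1 : Fin 7) = 6 := rfl
  rw [eq_mul_inv_iff_mul_eq, eq_inv_mul_iff_mul_eq]
  ext1 ⟨i, g⟩
  rcases i with k | _ | _
  on_goal 1 => fin_cases k
  all_goals simp [aBlock, aLabel, mul_assoc, h]

/-- The action of the mirror automorphism on the blocks. -/
def mirrorBlock : Block → Block :=
  Sum.elim ![.inr true, .inl 1, .inr false, .inl 4, .inl 3, .inl 6, .inl 5]
    fun z ↦ bif z then .inl 0 else .inl 2

/-- The labels by which the mirror automorphism acts on the blocks. -/
def mirrorLabel : Block → G :=
  Sum.elim ![K.y 5 * K.c ^ 5, K.y 6 * K.y 0, K.y 0 * K.c ^ 6, K.y 0 * K.c ^ 4,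
      K.y 0 * K.y 1 * K.c ^ 3, K.y 2 * K.c ^ 3, K.y 0 * K.y 6 * K.y 5 * K.y 4 * K.c ^ 4] fun z ↦
    bif z then K.y 4 * K.y 3 * K.y 2 * K.c ^ 2 else K.y 6 * K.y 5 * K.c

theorem mirrorWord_apply (i : Block) (g : G) :
    mirrorWord K.blockA K.blockC (i, g) = (mirrorBlock i, K.mirrorLabel i * g) := by
  have h : (-1 : Fin 7) = 6 := rfl
  rcases i with k | _ | _
  on_goal 1 => fin_cases k
  all_goals
    simp [mirrorWord, mirrorBlock, mirrorLabel, aBlock, aLabel, pow_succ, mul_assoc, h, c_inv,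
      c_mul_y, c_mul_y_mul]

theorem line_sq_five : K.y 6 * K.y 5 * K.y 1 * (K.y 6 * K.y 5 * K.y 1) = 1 := by
  simpa [toFanoSystem] using K.toFanoSystem.γ_rev 5 ▸ K.toFanoSystem.γ_mul_self 5

theorem mul_pow_four_six :
    K.y 6 * K.y 0 * (K.y 6 * K.y 0) * (K.y 6 * K.y 0 * (K.y 6 * K.y 0)) = 1 := by
  simpa [toFanoSystem, pow_succ, mul_assoc] using K.toFanoSystem.mul_pow_four 6

/-- The heptagon relation turns this word into a conjugate of the inverse of a `quad` word. -/
theorem mul_y_six_sq :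
    K.y 0 * K.y 6 * K.y 5 * K.y 4 * K.y 6 * (K.y 0 * K.y 6 * K.y 5 * K.y 4 * K.y 6) = 1 := by
  have hept : K.y 6 * K.y 5 * K.y 4 = K.y 0 * K.y 1 * K.y 2 * K.y 3 := by
    rw [← mul_inv_eq_one, ← K.heptagon]
    simp [mul_assoc]
  have quad : K.y 3 * K.y 2 * K.y 1 * K.y 6 * (K.y 3 * K.y 2 * K.y 1 * K.y 6) = 1 :=
    K.toFanoSystem.quad_sq 6
  have heq : K.y 0 * K.y 6 * K.y 5 * K.y 4 * K.y 6 = K.y 1 * K.y 2 * K.y 3 * K.y 6 := by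
    simpa [mul_assoc] using congrArg (K.y 0 * · * K.y 6) hept
  rw [heq]
  simpa [mul_assoc] using congrArg (fun g ↦ K.y 6 * g⁻¹ * K.y 6) quad

theorem mirrorLabel_sq (i : Block) :
    K.mirrorLabel (mirrorBlock i) * K.mirrorLabel i *
      (K.mirrorLabel (mirrorBlock i) * K.mirrorLabel i) = 1 := by
  have h0 : K.mirrorLabel (.inr true) * K.mirrorLabel (.inl 0) = K.y 4 * K.y 3 * K.y 2 * K.y 0 := by
    simp [mirrorLabel, pow_succ, mul_assoc, c_mul_y_mul]
  have h2 : K.mirrorLabel (.inr false) * K.mirrorLabel (.inl 2) = K.y 6 * K.y 5 * K.y 1 := by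
    simp [mirrorLabel, pow_succ, mul_assoc, c_mul_y_mul]
  have h3 : K.mirrorLabel (.inl 4) * K.mirrorLabel (.inl 3) = K.y 0 * K.y 1 * K.y 3 := by
    simp [mirrorLabel, pow_succ, mul_assoc, c_mul_y_mul]
  have h5 : K.mirrorLabel (.inl 6) * K.mirrorLabel (.inl 5) =
      K.y 0 * K.y 6 * K.y 5 * K.y 4 * K.y 6 := by
    simp [mirrorLabel, pow_succ, mul_assoc, c_mul_y_mul]
  have swap {u v w : G} (h : u * v = w) (hw : w * w = 1) : v * u * (v * u) = 1 := by
    rw [← h, mul_assoc, mul_eq_one_comm] at hw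
    simpa only [mul_assoc] using hw
  rcases i with k | _ | _
  · fin_cases k
    exacts [h0 ▸ K.quad_sq, K.mul_pow_four_six, h2 ▸ K.line_sq_five, h3 ▸ K.line_sq,
      swap h3 K.line_sq, h5 ▸ K.mul_y_six_sq, swap h5 K.mul_y_six_sq]
  exacts [swap h2 K.line_sq_five, swap h0 K.quad_sq]

theorem mirrorWord_pow_four : mirrorWord K.blockA K.blockC ^ 4 = 1 := by
  have h : ∀ i, mirrorBlock (mirrorBlock i) = i := by decide
  ext1 ⟨i, g⟩
  have hi := congrArg (· * g) (K.mirrorLabel_sq i)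
  simpa [pow_succ, mirrorWord_apply, h, mul_assoc] using hi

/-- The Hurwitz pair of monomial permutations induced from `K`. -/
def toHurwitzPair : HurwitzPair (Equiv.Perm (Block × G)) where
  a := K.blockA
  c := K.blockC
  a_mul_self := K.blockA_mul_self
  c_pow_seven := K.blockC_pow_seven
  a_mul_c_mul_a := K.blockA_mul_blockC_mul_blockA
  mirrorWord_pow_four := K.mirrorWord_pow_four

theorem card_closure_c_y_le_card_closure_blockA_blockC :
    9 * Nat.card (Subgroup.closure {K.c, K.y 0}) ≤
      Nat.card (Subgroup.closure {K.blockA, K.blockC}) := by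
  set T := Subgroup.closure {K.blockA, K.blockC}
  have : Finite T := K.toHurwitzPair.card_closure_a_c_le.1
  have ha : K.blockA ∈ T := Subgroup.subset_closure (.inl rfl)
  have hc : K.blockC ∈ T := Subgroup.subset_closure (.inr rfl)
  have hL : Subgroup.closure {K.c, K.y 0} ≤ labelSubgroup T (.inr false) := by
    refine (Subgroup.closure_le _).2 (Set.pair_subset ⟨_, hc, by simp⟩
      ⟨K.blockA * K.blockC ^ 5 * K.blockA * K.blockC ^ 2 * K.blockA,
        by apply_rules [mul_mem, pow_mem], fun g ↦ ?_⟩)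
    have h₂ : (-(2 • 1) : Fin 7) = 5 := rfl
    have h₅ : (5 - 5 • 1 : Fin 7) = 0 := rfl
    simp [aBlock, aLabel, blockC_pow_inl, h₂, h₅]
  have htrans : ∀ i, ∃ t ∈ T, ∀ g, t (.inr false, g) = (i, g) := by
    rintro (k | _ | _)
    · refine ⟨K.blockC ^ (-k).val * K.blockA, mul_mem (pow_mem hc _) ha, fun g ↦ ?_⟩
      have hk : ∀ j : Fin 7, j.val • (1 : Fin 7) = j := by decide
      simp [aBlock, aLabel, blockC_pow_inl, hk]
    · exact ⟨1, one_mem T, fun g ↦ rfl⟩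
    · refine ⟨K.blockA * K.blockC ^ 4 * K.blockA, by apply_rules [mul_mem, pow_mem], fun g ↦ ?_⟩
      have h₄ : (-(4 • 1) : Fin 7) = 3 := rfl
      simp [aBlock, aLabel, blockC_pow_inl, h₄]
  simpa using card_mul_card_mul_card_le (M := ⊥) bot_le bot_le hL htrans

end CyclicFanoSystem

/-- The central extension of `V` by `Z` whose 2-cocycle is the biadditive map `B`. -/
@[ext]
structure BilinExt {V Z : Type*} [AddCommGroup V] [AddCommGroup Z] (B : V →+ V →+ Z) where
  vec : V
  scalar : Z

namespace BilinExt

variable {V Z : Type*} [AddCommGroup V] [AddCommGroup Z] {B : V →+ V →+ Z}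

instance : Mul (BilinExt B) := ⟨fun x y ↦ ⟨x.vec + y.vec, x.scalar + y.scalar + B x.vec y.vec⟩⟩

instance : One (BilinExt B) := ⟨⟨0, 0⟩⟩

instance : Inv (BilinExt B) := ⟨fun x ↦ ⟨-x.vec, -x.scalar + B x.vec x.vec⟩⟩

@[simp] theorem vec_mul (x y : BilinExt B) : (x * y).vec = x.vec + y.vec := rfl

@[simp] theorem scalar_mul (x y : BilinExt B) :
    (x * y).scalar = x.scalar + y.scalar + B x.vec y.vec := rfl

@[simp] theorem vec_one : (1 : BilinExt B).vec = 0 := rfl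

@[simp] theorem scalar_one : (1 : BilinExt B).scalar = 0 := rfl

@[simp] theorem vec_inv (x : BilinExt B) : x⁻¹.vec = -x.vec := rfl

@[simp] theorem scalar_inv (x : BilinExt B) : x⁻¹.scalar = -x.scalar + B x.vec x.vec := rfl

instance : Group (BilinExt B) :=
  Group.ofLeftAxioms
    (fun x y z ↦ by ext <;> simp [add_assoc]; abel)
    (fun x ↦ by ext <;> simp)
    (fun x ↦ by ext <;> simp)

/-- The underlying pair of an element of the extension. -/
def equivProd : BilinExt B ≃ V × Z where
  toFun x := (x.vec, x.scalar)
  invFun p := ⟨p.1, p.2⟩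

instance [DecidableEq V] [DecidableEq Z] : DecidableEq (BilinExt B) := equivProd.decidableEq

/-- The automorphism of the extension given by an automorphism of `V` preserving `B`. -/
def mapEquiv (s : V ≃+ V) (hs : ∀ u v, B (s u) (s v) = B u v) : BilinExt B ≃* BilinExt B where
  toFun x := ⟨s x.vec, x.scalar⟩
  invFun x := ⟨s.symm x.vec, x.scalar⟩
  left_inv x := by simp
  right_inv x := by simp
  map_mul' x y := by ext <;> simp [hs]

end BilinExt

namespace FanoModel

/-- The cocycle of `LabelGroup`, encoding the commutation relations of the `α i` and `γ i` in a
Fano system: these are involutions, `α i` commutes with all of them but `α (i ± 1)` and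
`γ (i + 3)`, …, `γ (i + 6)`, and `γ i` commutes with all `γ j` but `γ (i ± 2)`. -/
def cocycle : (Fin 7 ⊕ Fin 7 → ZMod 2) →+ (Fin 7 ⊕ Fin 7 → ZMod 2) →+ ZMod 2 :=
  AddMonoidHom.mk' (fun u ↦ AddMonoidHom.mk' (fun v ↦ ∑ i, (u (.inl i) * (v (.inl (i + 1)) +
    v (.inr (i + 3)) + v (.inr (i + 4)) + v (.inr (i + 5)) + v (.inr (i + 6))) +
      u (.inr i) * v (.inr (i + 2))))
    fun v w ↦ by simp only [Pi.add_apply, ← Finset.sum_add_distrib]; congr! 1; ring)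
    fun u v ↦ by ext; simp [add_mul, Finset.sum_add_distrib]; abel

/-- The group of order `2¹⁵` acting on each block. -/
abbrev LabelGroup := BilinExt cocycle

/-- The generator of `LabelGroup` corresponding to `FanoSystem.α`. -/
def α (i : Fin 7) : LabelGroup := ⟨Pi.single (.inl i) 1, 0⟩

/-- The generator of `LabelGroup` corresponding to `FanoSystem.γ`. -/
def γ (i : Fin 7) : LabelGroup := ⟨Pi.single (.inr i) 1, 0⟩

/-- The element of `LabelGroup` corresponding to `FanoSystem.β`, by `FanoSystem.β_eq`. -/
def β (i : Fin 7) : LabelGroup := γ (i + 4) * α (i + 6) * γ (i + 1) * α (i + 1)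

/-- The translation of `𝔽₈` by `ξⁱ`, where `none` stands for `0` and `some p` for `ξᵖ`, with
`ξ³ = ξ + 1`. -/
def translate (i : Fin 7) : Equiv.Perm (Option (Fin 7)) :=
  Function.Involutive.toPerm
    (fun x ↦ x.elim (some i) fun p ↦ ![none, some (i + 3), some (i + 6), some (i + 1),
      some (i + 5), some (i + 4), some (i + 2)] (p - i)) <| by
    unfold Function.Involutive
    decide +revert

/-- The labels by which the point `i` acts on the blocks, which are indexed by `𝔽₈`. -/
def label (i : Fin 7) (x : Option (Fin 7)) : LabelGroup :=
  x.elim 1 fun p ↦ ![1, γ i, α (i + 6), γ i, β (i + 4), β (i + 4), α (i + 6)] (p - i)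

/-- The point `i` of the Fano system. -/
def y (i : Fin 7) : Equiv.Perm (Option (Fin 7) × LabelGroup) := monomial (translate i) (label i)

/-- The automorphism `α i ↦ α (i + 1)`, `γ i ↦ γ (i + 1)` of `LabelGroup`. -/
def shift : LabelGroup ≃* LabelGroup :=
  BilinExt.mapEquiv
    (.arrowCongr ((Equiv.addRight (1 : Fin 7)).sumCongr (Equiv.addRight 1)) (.refl _)) fun u v ↦ by
    simp only [cocycle, AddMonoidHom.mk'_apply]
    rw [← Equiv.sum_comp (Equiv.addRight (1 : Fin 7))]
    simp [add_right_comm _ (1 : Fin 7)]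

/-- The multiplication by `ξ` on the blocks, combined with `shift`. -/
def c : Equiv.Perm (Option (Fin 7) × LabelGroup) :=
  (Equiv.addRight 1).optionCongr.prodCongr shift.toEquiv

theorem shift_label :
    ∀ i p, shift (label i p) = label (i + 1) ((Equiv.addRight 1).optionCongr p) := by
  decide +kernel

@[simp] theorem vec_shift_inl (x : LabelGroup) (i : Fin 7) :
    (shift x).vec (.inl i) = x.vec (.inl (i - 1)) := by
  simp [shift, BilinExt.mapEquiv, AddEquiv.arrowCongr, sub_eq_add_neg]

@[simp] theorem vec_shift_inr (x : LabelGroup) (i : Fin 7) :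
    (shift x).vec (.inr i) = x.vec (.inr (i - 1)) := by
  simp [shift, BilinExt.mapEquiv, AddEquiv.arrowCongr, sub_eq_add_neg]

theorem shift_pow_seven : (shift : MulAut LabelGroup) ^ 7 = 1 := by
  have h : ∀ i : Fin 7, i - 1 - 1 - 1 - 1 - 1 - 1 - 1 = i := by decide
  ext x i
  · cases i <;> simp [pow_succ, h]
  · rfl

theorem c_pow_seven : c ^ 7 = 1 := by
  have h : ∀ p : Fin 7, p + 1 + 1 + 1 + 1 + 1 + 1 + 1 = p := by decide
  have hs (e : LabelGroup) := DFunLike.congr_fun shift_pow_seven e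
  simp only [pow_succ, pow_zero, one_mul, MulAut.mul_apply, MulAut.one_apply] at hs
  ext1 ⟨_ | p, e⟩ <;> simp [pow_succ, c, h, hs]

theorem y_mem_monomialGroup (i : Fin 7) : y i ∈ monomialGroup (Option (Fin 7)) LabelGroup :=
  monomial_mem_monomialGroup _ _

/-- A Fano system realising the bound on the order of `⟨c, y₀⟩`. -/
def cyclicFanoSystem : CyclicFanoSystem (Equiv.Perm (Option (Fin 7) × LabelGroup)) where
  y := y
  c := c
  c_pow_seven := c_pow_seven
  conj_c i := by
    rw [MulAut.conj_apply, mul_inv_eq_iff_eq_mul]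
    ext1 ⟨p, e⟩
    have h : ∀ p, (Equiv.addRight 1).optionCongr (translate i p) =
        translate (i + 1) ((Equiv.addRight 1).optionCongr p) := by decide +revert
    simp [c, y, shift_label, h]
  y_zero_mul_self :=
    eq_one_of_mem_monomialGroup (by apply_rules [mul_mem, y_mem_monomialGroup]) (by decide +kernel)
  line_sq :=
    eq_one_of_mem_monomialGroup (by apply_rules [mul_mem, y_mem_monomialGroup]) (by decide +kernel)
  mul_pow_four :=
    eq_one_of_mem_monomialGroup (by apply_rules [pow_mem, mul_mem, y_mem_monomialGroup])
      (by decide +kernel)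
  quad_sq :=
    eq_one_of_mem_monomialGroup (by apply_rules [mul_mem, y_mem_monomialGroup]) (by decide +kernel)
  heptagon :=
    eq_one_of_mem_monomialGroup (by apply_rules [mul_mem, y_mem_monomialGroup]) (by decide +kernel)

theorem closure_range_α_γ : Subgroup.closure (Set.range α ∪ Set.range γ) = ⊤ := by
  set T := Subgroup.closure (Set.range α ∪ Set.range γ)
  have hα (i) : α i ∈ T := Subgroup.subset_closure (.inl ⟨i, rfl⟩)
  have hγ (i) : γ i ∈ T := Subgroup.subset_closure (.inr ⟨i, rfl⟩)
  have hz : (⟨0, 1⟩ : LabelGroup) ∈ T := by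
    have h : (α 0 * α 1) ^ 2 = ⟨0, 1⟩ := by decide +kernel
    exact h ▸ pow_mem (mul_mem (hα 0) (hα 1)) 2
  let A : AddSubgroup (Fin 7 ⊕ Fin 7 → ZMod 2) :=
    AddSubgroup.ofSub {u | ∃ s, (⟨u, s⟩ : LabelGroup) ∈ T} ⟨0, 0, one_mem T⟩ <| by
      rintro u ⟨s, hu⟩ v ⟨t, hv⟩
      exact ⟨_, mul_mem hu (inv_mem hv)⟩
  have hA (u) : u ∈ A := by
    rw [← Finset.univ_sum_single u]
    refine sum_mem fun i _ ↦ ?_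
    obtain h | h : u i = 0 ∨ u i = 1 := by generalize u i = x; decide +revert
    · simp [h, zero_mem]
    · rw [h]
      cases i
      exacts [⟨0, hα _⟩, ⟨0, hγ _⟩]
  have hZ : ∀ s t : ZMod 2, s = t ∨ s = 1 + t := by decide
  refine eq_top_iff.2 fun ⟨u, s⟩ _ ↦ ?_
  obtain ⟨t, ht⟩ := hA u
  obtain rfl | rfl := hZ s t
  · exact ht
  · convert mul_mem hz ht using 1
    ext <;> simp

theorem card_labelGroup : Nat.card LabelGroup = 2 ^ 15 := by
  simp [Nat.card_congr BilinExt.equivProd]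

theorem labelSubgroup_eq_top :
    labelSubgroup (Subgroup.closure {cyclicFanoSystem.c, cyclicFanoSystem.y 0}) none = ⊤ := by
  have hy : ∀ i, y i ∈ Subgroup.closure {cyclicFanoSystem.c, cyclicFanoSystem.y 0} :=
    cyclicFanoSystem.y_mem_closure
  have hα : ∀ i, (y i * y (i + 1) * y (i + 3)) (none, 1) = (none, α i) := by decide +kernel
  have hγ : ∀ i, (y (i + 3) * y i * y (i + 1)) (none, 1) = (none, γ i) := by decide +kernel
  have hmem (i j k : Fin 7) : y i * y j * y k ∈ monomialGroup (Option (Fin 7)) LabelGroup :=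
    mul_mem (mul_mem (y_mem_monomialGroup i) (y_mem_monomialGroup j)) (y_mem_monomialGroup k)
  have hmem' (i j k : Fin 7) :
      y i * y j * y k ∈ Subgroup.closure {cyclicFanoSystem.c, cyclicFanoSystem.y 0} :=
    mul_mem (mul_mem (hy i) (hy j)) (hy k)
  rw [eq_top_iff, ← closure_range_α_γ, Subgroup.closure_le, Set.union_subset_iff,
    Set.range_subset_iff, Set.range_subset_iff]
  exact ⟨fun i ↦ mem_labelSubgroup_of_apply_one (hmem _ _ _) (hmem' _ _ _) (hα i),
    fun i ↦ mem_labelSubgroup_of_apply_one (hmem _ _ _) (hmem' _ _ _) (hγ i)⟩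

theorem exists_mem_apply_none (p : Option (Fin 7)) :
    ∃ t ∈ Subgroup.closure {cyclicFanoSystem.c, cyclicFanoSystem.y 0},
      ∀ e : LabelGroup, t (none, e) = (p, e) := by
  cases p with
  | none => exact ⟨1, one_mem _, fun e ↦ rfl⟩
  | some p => exact ⟨y p, cyclicFanoSystem.y_mem_closure p, fun e ↦ by simp [y, translate, label]⟩

theorem orderOf_c : orderOf c = 7 := by
  have h : c (some 0, 1) ≠ (some 0, 1) := by decide +kernel
  have : Fact (Nat.Prime 7) := ⟨by norm_num⟩
  exact orderOf_eq_prime c_pow_seven fun hc ↦ h (by rw [hc, Equiv.Perm.one_apply])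

theorem le_card_closure_c_y :
    7 * 2 ^ 18 ≤ Nat.card (Subgroup.closure {cyclicFanoSystem.c, cyclicFanoSystem.y 0}) := by
  have hfin := cyclicFanoSystem.card_closure_c_y_le.1
  have hmem : c ∈ Subgroup.closure {cyclicFanoSystem.c, cyclicFanoSystem.y 0} :=
    Subgroup.subset_closure (.inl rfl)
  have hfix : c ∈ MulAction.stabilizer (Equiv.Perm (Option (Fin 7) × LabelGroup))
      ((none : Option (Fin 7)), (1 : LabelGroup)) := by
    simp [MulAction.mem_stabilizer_iff, c]
  have h := card_mul_card_mul_card_le (Subgroup.zpowers_le.2 hmem) (Subgroup.zpowers_le.2 hfix)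
    labelSubgroup_eq_top.ge exists_mem_apply_none
  simpa [orderOf_c, card_labelGroup] using h

end FanoModel

namespace HurwitzPair

variable {G : Type*} [Group G]

theorem mirrorWord_eq {a b c : G} (hb : b = a * c⁻¹) (hb_sq : b ^ 2 = c * a) :
    mirrorWord a c = b ^ 2 * c * b ^ 2 * c ^ 4 * b * c ^ 4 := by
  rw [hb_sq, hb]
  simp [mirrorWord, pow_succ, mul_assoc]

/-- A Hurwitz pair from elements `a`, `b`, `c` satisfying the relations of `hurwitzRels 4`. -/
def ofRelations {a b c : G} (ha : a ^ 2 = 1) (hb : b ^ 3 = 1) (hc : c ^ 7 = 1)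
    (habc : a * b * c = 1) (hS : (b ^ 2 * c * b ^ 2 * c ^ 4 * b * c ^ 4) ^ 4 = 1) :
    HurwitzPair G :=
  have ha' : a * a = 1 := by rw [← sq, ha]
  have hb_eq : b = a * c⁻¹ := by
    rw [eq_mul_inv_iff_mul_eq, ← inv_eq_of_mul_eq_one_right ha', eq_inv_iff_mul_eq_one,
      mul_eq_one_comm, ← mul_assoc, habc]
  have hb_sq : b ^ 2 = c * a := by
    rw [eq_inv_of_mul_eq_one_left ((pow_succ b 2).symm.trans hb), hb_eq, mul_inv_rev, inv_inv,
      inv_eq_of_mul_eq_one_right ha']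
  { a := a
    c := c
    a_mul_self := ha'
    c_pow_seven := hc
    a_mul_c_mul_a := by rw [mul_assoc, ← hb_sq, hb_eq, sq]; simp [← mul_assoc, ha']
    mirrorWord_pow_four := by rw [mirrorWord_eq hb_eq hb_sq, hS] }

variable (P : HurwitzPair G)

theorem a_mul_c_inv_sq : (P.a * P.c⁻¹) ^ 2 = P.c * P.a := by
  have h : P.a * P.c⁻¹ * P.a = P.c * P.a * P.c := by rw [c_inv, a_mul_c_six_mul_a]
  rw [sq, ← mul_assoc, h, mul_inv_cancel_right]

theorem a_mul_c_inv_pow_three : (P.a * P.c⁻¹) ^ 3 = 1 := by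
  simp [pow_succ _ 2, a_mul_c_inv_sq, mul_assoc]

theorem lift_eq_one {r : FreeGroup (Fin 3)} (hr : r ∈ hurwitzRels 4) :
    FreeGroup.lift ![P.a, P.a * P.c⁻¹, P.c] r = 1 := by
  obtain rfl | rfl | rfl | rfl | rfl := hr
  · simp [sq]
  · simp [P.a_mul_c_inv_pow_three]
  · simp [P.c_pow_seven]
  · simp [← mul_assoc]
  · simpa [mirrorWord_eq rfl P.a_mul_c_inv_sq] using P.mirrorWord_pow_four

theorem card_closure_le_card_presentedGroup [Finite (PresentedGroup (hurwitzRels 4))] :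
    Nat.card (Subgroup.closure {P.a, P.c}) ≤ Nat.card (PresentedGroup (hurwitzRels 4)) := by
  set f := PresentedGroup.toGroup fun _ ↦ P.lift_eq_one
  have hle : Subgroup.closure {P.a, P.c} ≤ f.range := by
    refine (Subgroup.closure_le _).2 (Set.pair_subset ⟨.of 0, ?_⟩ ⟨.of 2, ?_⟩) <;> simp [f]
  have : Finite f.range := Finite.of_surjective _ f.rangeRestrict_surjective
  exact (Subgroup.card_le_of_le hle).trans (Finite.card_range_le f)

end HurwitzPair

section Presentation

open PresentedGroup

/-- The generators `A` and `C` of the presented group. -/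
def presentedPair : HurwitzPair (PresentedGroup (hurwitzRels 4)) :=
  .ofRelations (a := of 0) (b := of 1) (c := of 2) (one_of_mem (.inl rfl))
    (one_of_mem (.inr <| .inl rfl)) (one_of_mem (.inr <| .inr <| .inl rfl))
    (one_of_mem (.inr <| .inr <| .inr <| .inl rfl)) (one_of_mem (.inr <| .inr <| .inr <| .inr rfl))

theorem closure_presentedPair : Subgroup.closure {presentedPair.a, presentedPair.c} = ⊤ := by
  have habc : (of 0 * of 1 * of 2 : PresentedGroup (hurwitzRels 4)) = 1 :=
    one_of_mem (.inr <| .inr <| .inr <| .inl rfl)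
  have ha : of 0 ∈ Subgroup.closure {presentedPair.a, presentedPair.c} :=
    Subgroup.subset_closure (.inl rfl)
  have hc : of 2 ∈ Subgroup.closure {presentedPair.a, presentedPair.c} :=
    Subgroup.subset_closure (.inr rfl)
  rw [eq_top_iff, ← closure_range_of, Subgroup.closure_le, Set.range_subset_iff,
    Fin.forall_fin_succ, Fin.forall_fin_two]
  refine ⟨ha, ?_, hc⟩
  have := (Subgroup.mul_mem_cancel_right _ hc).1 (habc ▸ one_mem _)
  exact (Subgroup.mul_mem_cancel_left _ ha).1 this

end Presentation

theorem stmt_16 : Nat.card (PresentedGroup (hurwitzRels 4)) = 16515072 := by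
  obtain ⟨hfin, hle⟩ := presentedPair.card_closure_a_c_le
  rw [closure_presentedPair] at hfin hle
  have : Finite (PresentedGroup (hurwitzRels 4)) := .of_equiv _ Subgroup.topEquiv.toEquiv
  have hge :=
    calc 9 * (7 * 2 ^ 18)
        ≤ 9 * Nat.card (Subgroup.closure
            {FanoModel.cyclicFanoSystem.c, FanoModel.cyclicFanoSystem.y 0}) :=
          Nat.mul_le_mul_left 9 FanoModel.le_card_closure_c_y
      _ ≤ _ := FanoModel.cyclicFanoSystem.card_closure_c_y_le_card_closure_blockA_blockC
      _ ≤ Nat.card (PresentedGroup (hurwitzRels 4)) :=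
          FanoModel.cyclicFanoSystem.toHurwitzPair.card_closure_le_card_presentedGroup
  rw [Subgroup.card_top] at hle
  exact le_antisymm (by simpa using hle) (by simpa using hge)
end
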